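/- arXiv:1909.03407 — 2 statements merged into one kernel-verified Lean document; each statement's English description precedes it below -/
import Mathlib

section
/- Let α, β ≥ 2 be integers satisfying α² − 125β² = 4 and α + β ≡ 0 (mod 25), and set d = (α+β)² − 4. Let ζ₅ = exp(2πi/5) ∈ ℂ and let M = ℚ((ζ₅ − ζ₅⁻¹)·√d) be the subfield of ℂ generated over ℚ by (ζ₅ − ζ₅⁻¹)·√d. Then the 5-rank of the ideal class group of M is at least 2; equivalently, there exists an injective group homomorphism from (ℤ/5ℤ) × (ℤ/5ℤ) into the ideal class group Cl(𝓞_M) of the ring of integers of M. -/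
open NumberField
open scoped nonZeroDivisors Pointwise

/-!
Two facts about a cyclic extension `L/K` of prime degree `p`, with `K` totally complex and without
nontrivial `p`-th roots of unity, replace class field theory: the Herbrand quotient of the units and
the count of ambiguous classes show that, if `L/K` is unramified, the norm on class groups is not
onto. Suppose now that `N/M` is unramified with group `(ℤ/p)²` and that the class group of `M` has
`p`-rank less than `2`. Then all the intermediate fields of degree `p` have the same norm group,
namely the `p`-th powers. Every prime of `M` splits completely in one of these fields, since its
decomposition group is cyclic, so every ideal class is a `p`-th power and hence a norm, a
contradiction.

For `M = ℚ((ζ₅ - ζ₅⁻¹)√d)` the extension is generated by fifth roots of the units `(t + √d) / 2` and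
`(t' + √(125 d)) / 2`, where `t = α + β` and `t' = α + 125 β`. The congruences `25 ∣ t` and
`t' ≡ ± 2 (mod 125)` make it unramified above `5`. Independence of the two radicals is visible from
Frobenius elements above a few explicit primes, chosen according to the index of `(α, β)` in the
sequence of solutions of the Pell equation modulo its period.
-/

/-! ### Herbrand quotients -/

section FinitelyGenerated

theorem index_range_eq_card_ker {T : Type*} [AddCommGroup T] [Finite T] (f : T →+ T) :
    f.range.index = Nat.card f.ker := by
  refine Nat.eq_of_mul_eq_mul_left (Nat.card_pos (α := f.range)) ?_
  rw [f.range.card_mul_index, mul_comm, ← AddSubgroup.index_ker, f.ker.card_mul_index]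

theorem index_range_nsmul_pi_int {ι : Type*} [Fintype ι] (n : ℕ) :
    (nsmulAddMonoidHom (α := ι → ℤ) n).range.index = n ^ Fintype.card ι := by
  have hrange : (nsmulAddMonoidHom (α := ι → ℤ) n).range =
      AddSubgroup.pi Set.univ fun _ => AddSubgroup.zmultiples (n : ℤ) := by
    ext v
    simp [AddSubgroup.mem_pi, Int.mem_zmultiples_iff, dvd_def, funext_iff,
      Classical.skolem, eq_comm]
  simp [hrange, Int.index_zmultiples]

theorem exists_addEquiv_pi_int_prod_torsion (A : Type*) [AddCommGroup A] [Module.Finite ℤ A] :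
    Nonempty (A ≃+ (Fin (Module.finrank ℤ A) → ℤ) × Submodule.torsion ℤ A) := by
  obtain ⟨f, hf⟩ := Module.projective_lifting_property _ LinearMap.id
    (Submodule.torsion ℤ A).mkQ_surjective
  let split := lequivProdOfRightSplitExact (Submodule.torsion ℤ A).injective_subtype
    (by rw [Submodule.range_subtype, Submodule.ker_mkQ]) hf
  let basis := Module.finBasisOfFinrankEq ℤ (A ⧸ Submodule.torsion ℤ A)
    (finrank_quotient_eq_of_le_torsion le_rfl)
  exact ⟨(split.symm.trans ((LinearEquiv.prodComm ℤ _ _).trans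
    (basis.equivFun.prodCongr (LinearEquiv.refl ℤ _)))).toAddEquiv⟩

theorem index_range_nsmul (A : Type*) [AddCommGroup A] [Module.Finite ℤ A] {n : ℕ} (hn : n ≠ 0) :
    (nsmulAddMonoidHom (α := A) n).range.index =
      n ^ Module.finrank ℤ A * Nat.card (nsmulAddMonoidHom (α := A) n).ker := by
  obtain ⟨e⟩ := exists_addEquiv_pi_int_prod_torsion A
  set T := Submodule.torsion ℤ A
  have : Finite T := Module.finite_of_fg_torsion _ Submodule.torsion_isTorsion
  have hrange : (nsmulAddMonoidHom (α := A) n).range.map e.toAddMonoidHom =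
      (nsmulAddMonoidHom n).range.prod (nsmulAddMonoidHom (α := T) n).range := by
    ext ⟨v, t⟩
    have : (∃ x, n • e x = (v, t)) ↔ ∃ y, n • y = (v, t) :=
      (e.surjective.exists (p := fun y => n • y = (v, t))).symm
    simpa [AddSubgroup.mem_prod, Prod.ext_iff] using this
  have hker : (nsmulAddMonoidHom (α := T) n).ker.map T.toAddSubgroup.subtype =
      (nsmulAddMonoidHom (α := A) n).ker := by
    ext x
    have htorsion (hx : n • x = 0) : x ∈ T :=
      (Submodule.mem_torsion_iff x).2 ⟨⟨n, by simpa using hn⟩, by simpa using hx⟩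
    simpa [Subtype.ext_iff, AddMonoidHom.mem_ker] using htorsion
  have hcard : Nat.card (nsmulAddMonoidHom (α := A) n).ker =
      Nat.card (nsmulAddMonoidHom (α := T) n).ker := by
    rw [← hker]
    exact AddSubgroup.card_map_of_injective T.toAddSubgroup.subtype_injective
  rw [hcard, ← index_range_eq_card_ker, ← AddSubgroup.index_map_equiv _ e]
  exact (congrArg AddSubgroup.index hrange).trans
    (by rw [AddSubgroup.index_prod, index_range_nsmul_pi_int, Fintype.card_fin])

theorem finite_addSubgroup {A : Type*} [AddCommGroup A] [Module.Finite ℤ A] (H : AddSubgroup A) :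
    Module.Finite ℤ H :=
  inferInstanceAs (Module.Finite ℤ (AddSubgroup.toIntSubmodule H))

theorem finite_ker_nsmul (A : Type*) [AddCommGroup A] [Module.Finite ℤ A] {n : ℕ} (hn : n ≠ 0) :
    Finite (nsmulAddMonoidHom (α := A) n).ker := by
  have := finite_addSubgroup (nsmulAddMonoidHom (α := A) n).ker
  exact Module.finite_of_fg_torsion _ fun x =>
    ⟨⟨n, by simpa using hn⟩,
      Subtype.ext ((natCast_zsmul (x : A) n).trans x.2)⟩

theorem index_range_nsmul_ne_zero (A : Type*) [AddCommGroup A] [Module.Finite ℤ A] {n : ℕ}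
    (hn : n ≠ 0) : (nsmulAddMonoidHom (α := A) n).range.index ≠ 0 := by
  have := finite_ker_nsmul A hn
  rw [index_range_nsmul A hn]
  exact mul_ne_zero (pow_ne_zero _ hn) Nat.card_pos.ne'

end FinitelyGenerated

section Herbrand

theorem exists_sub_one_mul_eq_natCast {R : Type*} [Ring R] {n : ℕ} {γ : R}
    (hγ : ∑ k ∈ Finset.range n, γ ^ k = 0) : ∃ q : R, (γ - 1) * q = n := by
  refine ⟨-∑ k ∈ Finset.range n, ∑ j ∈ Finset.range k, γ ^ j, ?_⟩
  rw [mul_neg, Finset.mul_sum]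
  simp [mul_geom_sum, hγ]

theorem index_range_pow_dvd {D : Type*} [AddCommGroup D] (l : AddMonoid.End D) (k : ℕ) :
    (AddMonoidHom.range (l ^ k)).index ∣ (AddMonoidHom.range l).index ^ k := by
  induction k with
  | zero =>
    have : AddMonoidHom.range (1 : AddMonoid.End D) = ⊤ :=
      AddMonoidHom.range_eq_top.2 Function.surjective_id
    simp [this]
  | succ k ih =>
    calc (AddMonoidHom.range (l ^ (k + 1))).index
        = ((AddMonoidHom.range (l ^ k)).map (l : D →+ D)).index := by
          rw [pow_succ']
          exact congrArg AddSubgroup.index (AddMonoidHom.range_comp _ _)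
      _ = (AddMonoidHom.range (l ^ k) ⊔ AddMonoidHom.ker l).index * (AddMonoidHom.range l).index :=
          AddSubgroup.index_map _ _
      _ ∣ (AddMonoidHom.range l).index ^ (k + 1) := by
          rw [pow_succ]
          exact mul_dvd_mul_right ((AddSubgroup.index_dvd_of_le le_sup_left).trans ih) _

variable {p : ℕ} [hp : Fact p.Prime]

open Polynomial in
theorem exists_X_sub_one_pow_pred_eq_geom_sum_add :
    ∃ q : ℤ[X], (X - 1) ^ (p - 1) = ∑ k ∈ Finset.range p, X ^ k + (p : ℤ[X]) * q := by
  have hmod : ((X : (ZMod p)[X]) - 1) ^ (p - 1) = ∑ k ∈ Finset.range p, X ^ k := by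
    refine mul_right_cancel₀ (X_sub_C_ne_zero (1 : ZMod p)) ?_
    rw [map_one, geom_sum_mul, pow_sub_one_mul hp.out.ne_zero, sub_pow_char, one_pow]
  have hdvd : C (p : ℤ) ∣ (X - 1) ^ (p - 1) - ∑ k ∈ Finset.range p, X ^ k := by
    refine C_dvd_iff_dvd_coeff _ _ |>.2 fun k => (ZMod.intCast_zmod_eq_zero_iff_dvd _ p).1 ?_
    rw [← eq_intCast (Int.castRingHom (ZMod p)), ← coeff_map]
    simp [Polynomial.map_sum, hmod]
  obtain ⟨q, hq⟩ := hdvd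
  exact ⟨q, by rw [← sub_eq_iff_eq_add', hq]; simp⟩

theorem exists_sub_one_pow_pred_eq_natCast_mul {R : Type*} [Ring R] {γ : R}
    (hγ : ∑ k ∈ Finset.range p, γ ^ k = 0) : ∃ q : R, (γ - 1) ^ (p - 1) = p * q := by
  obtain ⟨q, hq⟩ := exists_X_sub_one_pow_pred_eq_geom_sum_add (p := p)
  exact ⟨Polynomial.aeval γ q, by simpa [hγ] using congrArg (Polynomial.aeval γ) hq⟩

section

variable {D : Type*} [AddCommGroup D] [Module.Finite ℤ D] {γ : AddMonoid.End D}

theorem index_range_sub_one_ne_zero (hγ : ∑ k ∈ Finset.range p, γ ^ k = 0) :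
    (AddMonoidHom.range (γ - 1)).index ≠ 0 := by
  obtain ⟨q, hq⟩ := exists_sub_one_mul_eq_natCast hγ
  have hle : (nsmulAddMonoidHom (α := D) p).range ≤ AddMonoidHom.range (γ - 1) := by
    rintro _ ⟨x, rfl⟩
    exact ⟨q x, DFunLike.congr_fun hq x⟩
  exact ne_zero_of_dvd_ne_zero (index_range_nsmul_ne_zero D hp.out.ne_zero)
    (AddSubgroup.index_dvd_of_le hle)

theorem pow_finrank_le_index_range_sub_one_pow (hγ : ∑ k ∈ Finset.range p, γ ^ k = 0) :
    p ^ Module.finrank ℤ D ≤ (AddMonoidHom.range (γ - 1)).index ^ (p - 1) := by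
  obtain ⟨q, hq⟩ := exists_sub_one_pow_pred_eq_natCast_mul hγ
  have hle : AddMonoidHom.range ((γ - 1) ^ (p - 1)) ≤ (nsmulAddMonoidHom (α := D) p).range := by
    rintro _ ⟨x, rfl⟩
    exact ⟨q x, (DFunLike.congr_fun hq x).symm⟩
  have hdvd := (AddSubgroup.index_dvd_of_le hle).trans (index_range_pow_dvd (γ - 1) (p - 1))
  have := finite_ker_nsmul D hp.out.ne_zero
  calc p ^ Module.finrank ℤ D ≤ (nsmulAddMonoidHom (α := D) p).range.index := by
        rw [index_range_nsmul D hp.out.ne_zero]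
        exact Nat.le_mul_of_pos_right _ Nat.card_pos
    _ ≤ _ := Nat.le_of_dvd
        (Nat.pos_of_ne_zero (pow_ne_zero _ (index_range_sub_one_ne_zero hγ))) hdvd

end

section

variable {E F : Type*} [AddCommGroup E] [AddCommGroup F]

theorem finrank_le_finrank_ker_add [Module.Finite ℤ E] [Module.Finite ℤ F] (N : E →+ F) :
    Module.finrank ℤ E ≤ Module.finrank ℤ N.ker + Module.finrank ℤ F := by
  have hsum := Submodule.finrank_quotient_add_finrank (LinearMap.ker N.toIntLinearMap)
  rw [N.toIntLinearMap.quotKerEquivRange.finrank_eq] at hsum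
  have hrange := Submodule.finrank_le (LinearMap.range N.toIntLinearMap)
  have hker : Module.finrank ℤ (LinearMap.ker N.toIntLinearMap) = Module.finrank ℤ N.ker := rfl
  omega

theorem index_sup_ker_mul_relIndex_range {l : E →+ E} {D : AddSubgroup E} (hl : l.range ≤ D) :
    (D ⊔ l.ker).index * l.range.relIndex D = (D.map l).relIndex D := by
  have hmap : (D.map l).relIndex l.range = (D ⊔ l.ker).index := by
    rw [AddMonoidHom.range_eq_map, AddSubgroup.relIndex_map_map, top_sup_eq,
      AddSubgroup.relIndex_top_right]
  rw [← hmap, AddSubgroup.relIndex_mul_relIndex _ _ _ (AddSubgroup.map_le_range l D) hl]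

theorem index_range_sup_ker_mul_index_range {N : E →+ F} {i : F →+ E} {n : ℕ}
    (hNi : ∀ y, N (i y) = n • y) :
    (i.range ⊔ N.ker).index * N.range.index = (nsmulAddMonoidHom (α := F) n).range.index := by
  rw [← AddSubgroup.index_map]
  congr 1
  ext z
  simp [hNi]

theorem relIndex_map_sub_id_ne_zero_and_pow_le [Module.Finite ℤ E] {D : AddSubgroup E}
    {g : E →+ E} (hg : ∀ x ∈ D, g x ∈ D)
    (hsum : ∀ x ∈ D, ∑ k ∈ Finset.range p, g^[k] x = 0) {r : ℕ}
    (hrank : (p - 1) * r ≤ Module.finrank ℤ D) :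
    (D.map (g - .id E)).relIndex D ≠ 0 ∧ p ^ r ≤ (D.map (g - .id E)).relIndex D := by
  have := finite_addSubgroup D
  let γ : AddMonoid.End D := (g.comp D.subtype).codRestrict D fun x => hg x x.2
  have hiterate (k : ℕ) (x : D) : ((γ ^ k) x : E) = g^[k] x := by
    induction k generalizing x with
    | zero => rfl
    | succ k ih => rw [pow_succ]; exact ih (γ x)
  have hγ : ∑ k ∈ Finset.range p, γ ^ k = 0 := by
    refine AddMonoidHom.ext fun x => Subtype.ext ?_
    refine ((congrArg Subtype.val (AddMonoidHom.finsetSum_apply _ _ x)).trans ?_).trans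
      (hsum x x.2)
    exact (map_sum D.subtype _ _).trans (Finset.sum_congr rfl fun k _ => hiterate k x)
  have hrel : (D.map (g - .id E)).relIndex D = (AddMonoidHom.range (γ - 1)).index := by
    rw [AddSubgroup.relIndex]
    congr 1
    ext x
    rw [AddSubgroup.mem_addSubgroupOf, AddSubgroup.mem_map, AddMonoidHom.mem_range]
    constructor
    · rintro ⟨y, hy, hyx⟩
      exact ⟨⟨y, hy⟩, Subtype.ext hyx⟩
    · rintro ⟨y, rfl⟩
      exact ⟨y, y.2, rfl⟩
  rw [hrel]
  refine ⟨index_range_sub_one_ne_zero hγ,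
    (Nat.pow_le_pow_iff_left (Nat.sub_ne_zero_of_lt hp.out.one_lt)).1 ?_⟩
  calc (p ^ r) ^ (p - 1) = p ^ ((p - 1) * r) := by rw [← pow_mul, mul_comm]
    _ ≤ p ^ Module.finrank ℤ D := Nat.pow_le_pow_right hp.out.pos hrank
    _ ≤ _ := pow_finrank_le_index_range_sub_one_pow hγ

/-- A bound for the Herbrand quotient `(ker N : (g - 1) E) / (F : N E)` of a module `E` over the
cyclic group `⟨g⟩` of order `p`, where `N` and `i` stand for the norm to the invariants and their
inclusion. -/
theorem index_range_ne_zero_and_mul_le_relIndex [Module.Finite ℤ E] [Module.Finite ℤ F]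
    {N : E →+ F} {i : F →+ E} {g : E →+ E} (hNi : ∀ y, N (i y) = p • y)
    (hiN : ∀ x, i (N x) = ∑ k ∈ Finset.range p, g^[k] x)
    (hNg : ∀ x, N (g x) = N x) (hgi : ∀ y, g (i y) = i y)
    (hF : ∀ y : F, p • y = 0 → y = 0)
    (hrank : p * (Module.finrank ℤ F + 1) ≤ Module.finrank ℤ E + 1) :
    N.range.index ≠ 0 ∧ p * N.range.index ≤ (g - .id E).range.relIndex N.ker := by
  set l : E →+ E := g - .id E
  have hindex := index_range_sup_ker_mul_index_range hNi
  have hindex0 := index_range_nsmul_ne_zero F hp.out.ne_zero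
  have hindexF : (nsmulAddMonoidHom (α := F) p).range.index = p ^ Module.finrank ℤ F := by
    have hbot : (nsmulAddMonoidHom (α := F) p).ker = ⊥ := (AddSubgroup.eq_bot_iff_forall _).2 hF
    rw [index_range_nsmul F hp.out.ne_zero, hbot, AddSubgroup.card_bot, mul_one]
  rw [← hindex] at hindex0
  have hsup : (N.ker ⊔ l.ker).index ≤ (i.range ⊔ N.ker).index := by
    have hi : i.range ≤ l.ker := by
      rintro _ ⟨y, rfl⟩
      simp [l, AddMonoidHom.mem_ker, hgi]
    exact Nat.le_of_dvd (Nat.pos_of_ne_zero (left_ne_zero_of_mul hindex0))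
      (AddSubgroup.index_dvd_of_le (sup_le (hi.trans le_sup_right) le_sup_left))
  have hl : l.range ≤ N.ker := by
    rintro _ ⟨x, rfl⟩
    simp [l, AddMonoidHom.mem_ker, hNg]
  obtain ⟨hmap0, hmap⟩ := relIndex_map_sub_id_ne_zero_and_pow_le (D := N.ker) (g := g)
    (r := Module.finrank ℤ F + 1) (fun x hx => by rwa [AddMonoidHom.mem_ker, hNg])
    (fun x hx => by rw [← hiN, (AddMonoidHom.mem_ker).1 hx, map_zero])
    (by have := finrank_le_finrank_ker_add N; rw [Nat.sub_mul]; omega)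
  have hmul := index_sup_ker_mul_relIndex_range hl
  refine ⟨right_ne_zero_of_mul hindex0, Nat.le_of_mul_le_mul_left ?_
    (Nat.pos_of_ne_zero (left_ne_zero_of_mul (hmul.trans_ne hmap0)))⟩
  calc (N.ker ⊔ l.ker).index * (p * N.range.index)
      ≤ (i.range ⊔ N.ker).index * (p * N.range.index) := Nat.mul_le_mul_right _ hsup
    _ = p ^ (Module.finrank ℤ F + 1) := by rw [mul_left_comm, hindex, hindexF, pow_succ']
    _ ≤ _ := hmap.trans hmul.ge

end

end Herbrand

/-! ### Ambiguous classes and norms of ideal classes -/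

section InvariantIdeals

variable {A B : Type*} (G : Type*) [CommRing A] [CommRing B] [IsDedekindDomain A]
  [IsDedekindDomain B] [Algebra A B] [Module.Finite A B] [Module.IsTorsionFree A B]
  [Algebra.FormallyUnramified A B] [Group G] [Finite G] [MulSemiringAction G B]
  [IsGaloisGroup G A B]

theorem map_under_dvd_of_forall_smul_eq {J P : Ideal B} [P.IsPrime] (hJ : ∀ σ : G, σ • J = J)
    (hJP : J ≤ P) (hP : P.under A ≠ ⊥) : (P.under A).map (algebraMap A B) ∣ J := by
  have : (P.under A).IsMaximal := Ideal.IsPrime.isMaximal inferInstance hP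
  have isMaximal_of_mem {Q : Ideal B} (hQ : Q ∈ (P.under A).primesOver B) : Q.IsMaximal :=
    hQ.1.isMaximal fun h => hP (by rw [hQ.2.over, h, Ideal.under_bot])
  rw [Ideal.map_algebraMap_eq_finsetProd_pow (R := B) hP]
  refine Finset.prod_dvd_of_coprime (fun Q hQ Q' hQ' hne => ?_) fun Q hQ => ?_
  · have := isMaximal_of_mem (Set.mem_toFinset.1 hQ)
    have := isMaximal_of_mem (Set.mem_toFinset.1 hQ')
    exact (Ideal.isCoprime_of_isMaximal hne).pow
  · obtain ⟨hprime, hover⟩ := Set.mem_toFinset.1 hQ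
    obtain ⟨σ, rfl⟩ := Ideal.exists_smul_eq_of_isGaloisGroup (P.under A) P Q G
    rw [Ideal.ramificationIdx_eq_one, pow_one, Ideal.dvd_iff_le, ← hJ σ]
    exact Ideal.pointwise_smul_le_pointwise_smul_iff.2 hJP

theorem exists_map_eq_of_forall_smul_eq {J : Ideal B} (hJ0 : J ≠ ⊥) (hJ : ∀ σ : G, σ • J = J) :
    ∃ I : Ideal A, I.map (algebraMap A B) = J := by
  induction J using WellFoundedGT.induction with
  | ind J ih =>
  by_cases htop : J = ⊤
  · exact ⟨⊤, by rw [htop, Ideal.map_top]⟩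
  obtain ⟨P, hP, hJP⟩ := Ideal.exists_le_maximal J htop
  have hunder : P.under A ≠ ⊥ :=
    mt Ideal.eq_bot_of_comap_eq_bot fun h => hJ0 (le_bot_iff.1 (h ▸ hJP))
  obtain ⟨J', hJ'⟩ := map_under_dvd_of_forall_smul_eq (A := A) G hJ hJP hunder
  set q := (P.under A).map (algebraMap A B) with hq
  have hq0 : q ≠ 0 := fun h => hJ0 (by rw [hJ', h, zero_mul]; rfl)
  have hJ'0 : J' ≠ ⊥ := fun h => hJ0 (by rw [hJ', h]; exact mul_zero _)
  have hlt : J < J' := by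
    refine lt_of_le_of_ne (hJ' ▸ Ideal.mul_le_right) fun h => hP.ne_top (top_le_iff.1 ?_)
    have hq1 : q = 1 := mul_right_cancel₀ hJ'0 (by rw [one_mul, ← hJ', h])
    rw [← Ideal.one_eq_top, ← hq1]
    exact Ideal.map_le_iff_le_comap.2 le_rfl
  have hσq (σ : G) : σ • q = q := by
    rw [Ideal.pointwise_smul_def, hq, Ideal.map_map]
    congr 1
    ext a
    exact smul_algebraMap σ a
  obtain ⟨I, hI⟩ := ih J' hlt hJ'0 fun σ => mul_left_cancel₀ hq0 <| by
    conv_rhs => rw [← hJ', ← hJ σ, hJ', smul_mul', hσq]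
  exact ⟨P.under A * I, by rw [Ideal.map_mul, hI, hJ']⟩

end InvariantIdeals

section ClassGroupLift

variable {R H : Type*} [CommRing R] [IsDedekindDomain R] [CommGroup H] (φ : (Ideal R)⁰ →* H)

theorem ker_mk0_le_ker
    (hφ : ∀ (x : R) (hx : Ideal.span {x} ∈ (Ideal R)⁰), φ ⟨Ideal.span {x}, hx⟩ = 1) :
    Con.ker (ClassGroup.mk0 (R := R)) ≤ Con.ker φ := by
  intro I J h
  obtain ⟨x, y, hx, hy, hxy⟩ := ClassGroup.mk0_eq_mk0_iff.1 h
  have span_mem {z : R} (hz : z ≠ 0) : Ideal.span {z} ∈ (Ideal R)⁰ :=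
    mem_nonZeroDivisors_iff_ne_zero.2 (by simpa using hz)
  have heq : (⟨_, span_mem hx⟩ : (Ideal R)⁰) * I = ⟨_, span_mem hy⟩ * J := Subtype.ext hxy
  simpa [hφ] using congrArg φ heq

/-- The homomorphism from the class group induced by a homomorphism from the monoid of nonzero
ideals which is trivial on principal ideals. -/
noncomputable def classGroupLift
    (hφ : ∀ (x : R) (hx : Ideal.span {x} ∈ (Ideal R)⁰), φ ⟨Ideal.span {x}, hx⟩ = 1) :
    ClassGroup R →* H :=
  ((Con.ker (ClassGroup.mk0 (R := R))).lift φ (ker_mk0_le_ker φ hφ)).comp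
    (Con.quotientKerEquivOfSurjective _ ClassGroup.mk0_surjective).symm.toMonoidHom

theorem classGroupLift_mk0
    (hφ : ∀ (x : R) (hx : Ideal.span {x} ∈ (Ideal R)⁰), φ ⟨Ideal.span {x}, hx⟩ = 1)
    (I : (Ideal R)⁰) : classGroupLift φ hφ (ClassGroup.mk0 I) = φ I := by
  have hsymm : (Con.quotientKerEquivOfSurjective _ ClassGroup.mk0_surjective).symm
      (ClassGroup.mk0 I) = (I : (Con.ker (ClassGroup.mk0 (R := R))).Quotient) :=
    (MulEquiv.symm_apply_eq _).2 rfl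
  simp only [classGroupLift, MonoidHom.comp_apply, MulEquiv.toMonoidHom_eq_coe,
    MonoidHom.coe_coe, hsymm]
  rfl

end ClassGroupLift

theorem relIndex_le_card_of_forall {A T : Type*} [CommGroup A] [Finite T] (H K : Subgroup A)
    (f : K → T) (hf : ∀ x y : K, f x = f y → (x : A) / y ∈ H) : H.relIndex K ≤ Nat.card T := by
  refine Nat.card_le_card_of_injective (fun q : K ⧸ H.subgroupOf K => f q.out) fun x y hxy => ?_
  rw [← QuotientGroup.out_eq' x, ← QuotientGroup.out_eq' y, QuotientGroup.eq_iff_div_mem]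
  exact hf _ _ hxy

theorem index_range_eq_card_ker_of_finite {A : Type*} [Group A] [Finite A] (f : A →* A) :
    f.range.index = Nat.card f.ker := by
  have hmul := f.ker.card_mul_index
  rw [Subgroup.index_ker, ← f.range.card_mul_index, mul_comm] at hmul
  exact (Nat.eq_of_mul_eq_mul_left Nat.card_pos hmul).symm

section GaloisAction

variable {M L : Type*} [Field M] [Field L] [Algebra M L]

theorem smul_span_singleton (g : Gal(L/M)) (x : 𝓞 L) :
    g • (Ideal.span {x} : Ideal (𝓞 L)) = Ideal.span {g • x} := by
  rw [Ideal.smul_closure, Set.smul_set_singleton]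

/-- The action of a Galois automorphism on the monoid of nonzero ideals. -/
noncomputable def galoisIdeal (g : Gal(L/M)) : (Ideal (𝓞 L))⁰ →* (Ideal (𝓞 L))⁰ :=
  ((MulDistribMulAction.toMonoidHom (Ideal (𝓞 L)) g).comp
    (Ideal (𝓞 L))⁰.subtype).codRestrict _ fun I =>
      mem_nonZeroDivisors_iff_ne_zero.2 fun h =>
        nonZeroDivisors.coe_ne_zero I ((smul_eq_zero_iff_eq g).1 h)

/-- The action of a Galois automorphism on units. -/
noncomputable def galoisUnit (g : Gal(L/M)) : (𝓞 L)ˣ →* (𝓞 L)ˣ :=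
  Units.map (MulSemiringAction.toRingHom Gal(L/M) (𝓞 L) g : 𝓞 L →* 𝓞 L)

theorem coe_galoisUnit (g : Gal(L/M)) (u : (𝓞 L)ˣ) :
    (galoisUnit g u : 𝓞 L) = g • (u : 𝓞 L) := rfl

variable [NumberField L]

/-- The action of a Galois automorphism on the class group. -/
noncomputable def galoisClass (g : Gal(L/M)) : ClassGroup (𝓞 L) →* ClassGroup (𝓞 L) :=
  classGroupLift (ClassGroup.mk0.comp (galoisIdeal g)) fun x hx => by
    rw [MonoidHom.comp_apply, ClassGroup.mk0_eq_one_iff]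
    exact ⟨_, smul_span_singleton g x⟩

theorem galoisClass_mk0 (g : Gal(L/M)) (I : (Ideal (𝓞 L))⁰) :
    galoisClass g (ClassGroup.mk0 I) = ClassGroup.mk0 (galoisIdeal g I) :=
  classGroupLift_mk0 _ _ I

/-- The group of ambiguous ideal classes: those fixed by the Galois automorphism `g`. -/
noncomputable def ambiguousClasses (g : Gal(L/M)) : Subgroup (ClassGroup (𝓞 L)) :=
  (galoisClass g / MonoidHom.id _).ker

theorem mem_ambiguousClasses {g : Gal(L/M)} {c : ClassGroup (𝓞 L)} :
    c ∈ ambiguousClasses g ↔ galoisClass g c = c := div_eq_one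

variable [NumberField M]

variable (M L) in
/-- The relative norm on the monoid of nonzero ideals. -/
noncomputable def relNormNonZero : (Ideal (𝓞 L))⁰ →* (Ideal (𝓞 M))⁰ :=
  ((Ideal.relNorm (𝓞 M) : Ideal (𝓞 L) →*₀ Ideal (𝓞 M)).toMonoidHom.comp
    (Ideal (𝓞 L))⁰.subtype).codRestrict _ fun I =>
      mem_nonZeroDivisors_iff_ne_zero.2 fun h =>
        nonZeroDivisors.coe_ne_zero I (Ideal.relNorm_eq_bot_iff.1 h)

variable (M L) in
/-- The norm homomorphism `Cl(L) → Cl(M)`. -/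
noncomputable def classNorm : ClassGroup (𝓞 L) →* ClassGroup (𝓞 M) :=
  classGroupLift (ClassGroup.mk0.comp (relNormNonZero M L)) fun x hx => by
    rw [MonoidHom.comp_apply, ClassGroup.mk0_eq_one_iff]
    exact ⟨_, Ideal.relNorm_singleton (𝓞 M) x⟩

theorem classNorm_mk0 (I : (Ideal (𝓞 L))⁰) :
    classNorm M L (ClassGroup.mk0 I) = ClassGroup.mk0 (relNormNonZero M L I) :=
  classGroupLift_mk0 _ _ I

variable (M L) in
/-- The relative norm on units. -/
noncomputable def unitNorm : (𝓞 L)ˣ →* (𝓞 M)ˣ :=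
  Units.map (Algebra.intNorm (𝓞 M) (𝓞 L) : 𝓞 L →* 𝓞 M)

theorem coe_unitNorm (u : (𝓞 L)ˣ) :
    (unitNorm M L u : 𝓞 M) = Algebra.intNorm (𝓞 M) (𝓞 L) u := rfl

variable [IsGalois M L]

theorem intNorm_smul (g : Gal(L/M)) (x : 𝓞 L) :
    Algebra.intNorm (𝓞 M) (𝓞 L) (g • x) = Algebra.intNorm (𝓞 M) (𝓞 L) x :=
  Algebra.intNorm_map_algEquiv _ x (MulSemiringAction.toAlgEquiv (𝓞 M) (𝓞 L) g)

theorem intNorm_algebraMap (x : 𝓞 M) :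
    Algebra.intNorm (𝓞 M) (𝓞 L) (algebraMap (𝓞 M) (𝓞 L) x) = x ^ Module.finrank M L := by
  apply FaithfulSMul.algebraMap_injective (𝓞 M) M
  rw [Algebra.algebraMap_intNorm (L := L), ← IsScalarTower.algebraMap_apply,
    IsScalarTower.algebraMap_apply (𝓞 M) M L, Algebra.norm_algebraMap, map_pow]

theorem algebraMap_intNorm_eq_prod {g : Gal(L/M)} (hg : ∀ σ, σ ∈ Subgroup.zpowers g) (x : 𝓞 L) :
    algebraMap (𝓞 M) (𝓞 L) (Algebra.intNorm (𝓞 M) (𝓞 L) x) =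
      ∏ k ∈ Finset.range (Module.finrank M L), g ^ k • x := by
  classical
  apply FaithfulSMul.algebraMap_injective (𝓞 L) L
  rw [map_prod, ← IsScalarTower.algebraMap_apply, IsScalarTower.algebraMap_apply (𝓞 M) M L,
    Algebra.algebraMap_intNorm (L := L), Algebra.norm_eq_prod_automorphisms,
    ← IsCyclic.image_range_orderOf hg, Finset.prod_image, orderOf_eq_card_of_forall_mem_zpowers hg,
    IsGalois.card_aut_eq_finrank]
  · rfl
  · rw [Finset.coe_range]
    exact pow_injOn_Iio_orderOf

theorem classNorm_galoisClass (g : Gal(L/M)) (c : ClassGroup (𝓞 L)) :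
    classNorm M L (galoisClass g c) = classNorm M L c := by
  obtain ⟨I, rfl⟩ := ClassGroup.mk0_surjective c
  rw [galoisClass_mk0, classNorm_mk0, classNorm_mk0]
  exact congrArg ClassGroup.mk0 (Subtype.ext (Ideal.relNorm_smul (𝓞 M) g (I : Ideal (𝓞 L))))

theorem card_classGroup_le_card_ambiguousClasses (g : Gal(L/M))
    (hsurj : Function.Surjective (classNorm M L)) :
    Nat.card (ClassGroup (𝓞 M)) ≤ Nat.card (ambiguousClasses g) := by
  have hle : (galoisClass g / MonoidHom.id _).range ≤ (classNorm M L).ker := by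
    rintro _ ⟨c, rfl⟩
    simp [MonoidHom.mem_ker, classNorm_galoisClass]
  rw [ambiguousClasses, ← index_range_eq_card_ker_of_finite,
    ← Subgroup.card_top (G := ClassGroup (𝓞 M)), ← MonoidHom.range_eq_top.2 hsurj,
    ← Subgroup.index_ker]
  exact Nat.le_of_dvd (Nat.pos_of_ne_zero Subgroup.index_ne_zero_of_finite)
    (Subgroup.index_dvd_of_le hle)

end GaloisAction

section AmbiguousClasses

-- The universe is forced by the cyclic Hilbert 90, `groupCohomology.exists_div_of_norm_eq_one`.
variable {M L : Type} [Field M] [NumberField M] [Field L] [NumberField L] [Algebra M L]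
  {g : Gal(L/M)}

/-- The ideal `I` satisfies `a • g I = b • I` for some nonzero `a`, `b` with `N b = e * N a`: the
unit `e`, determined modulo norms of units, measures how far the ambiguous class of `I` is from
being extended from `M`. -/
def IsAmbiguityUnit (g : Gal(L/M)) (I : Ideal (𝓞 L)) (e : (𝓞 M)ˣ) : Prop :=
  ∃ a b : 𝓞 L, a ≠ 0 ∧ b ≠ 0 ∧ Ideal.span {a} * g • I = Ideal.span {b} * I ∧
    Algebra.intNorm (𝓞 M) (𝓞 L) b = e * Algebra.intNorm (𝓞 M) (𝓞 L) a

theorem IsAmbiguityUnit.mul {I I' : Ideal (𝓞 L)} {e e' : (𝓞 M)ˣ} (h : IsAmbiguityUnit g I e)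
    (h' : IsAmbiguityUnit g I' e') : IsAmbiguityUnit g (I * I') (e * e') := by
  obtain ⟨a, b, ha, hb, hab, hn⟩ := h
  obtain ⟨a', b', ha', hb', hab', hn'⟩ := h'
  refine ⟨a * a', b * b', mul_ne_zero ha ha', mul_ne_zero hb hb', ?_, ?_⟩
  · rw [smul_mul', ← Ideal.span_singleton_mul_span_singleton, mul_mul_mul_comm, hab, hab',
      mul_mul_mul_comm, Ideal.span_singleton_mul_span_singleton]
  · rw [map_mul, map_mul, hn, hn', Units.val_mul]
    ring

variable [IsGalois M L]

theorem exists_mul_eq_mul_smul_of_intNorm_eq {g : Gal(L/M)}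
    (hg : ∀ σ, σ ∈ Subgroup.zpowers g) {a b : 𝓞 L} (ha : a ≠ 0)
    (hab : Algebra.intNorm (𝓞 M) (𝓞 L) a = Algebra.intNorm (𝓞 M) (𝓞 L) b) :
    ∃ z : 𝓞 L, z ≠ 0 ∧ a * z = b * g • z := by
  have ha' : (a : L) ≠ 0 := by simpa using ha
  have : IsCyclic Gal(L/M) := ⟨g, hg⟩
  have hnorm : Algebra.norm M ((b : L) / a) = 1 := by
    have hmul : Algebra.norm M ((b : L) / a) * Algebra.norm M (a : L) = Algebra.norm M (a : L) := by
      rw [← map_mul, div_mul_cancel₀ _ ha',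
        ← Algebra.algebraMap_intNorm (A := 𝓞 M) (K := M) (B := 𝓞 L) (L := L),
        ← hab, Algebra.algebraMap_intNorm (L := L)]
    have hna : Algebra.norm M (a : L) ≠ 0 := Algebra.norm_ne_zero_iff.2 ha'
    exact (mul_eq_right₀ hna).1 hmul
  obtain ⟨y, hy⟩ := groupCohomology.exists_div_of_norm_eq_one hg hnorm
  have hy_alg : IsAlgebraic ℤ (y : L) :=
    (IsFractionRing.isAlgebraic_iff ℤ ℚ L).2 (Algebra.IsAlgebraic.isAlgebraic _)
  obtain ⟨m, hm0, hm⟩ := hy_alg.exists_integral_multiple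
  refine ⟨⟨m • (y : L), hm⟩, fun h => ?_, RingOfIntegers.ext ?_⟩
  · have hmy : m • (y : L) = 0 := congrArg Subtype.val h
    simp [hm0] at hmy
  · change (a : L) * (m • (y : L)) = b * g (m • (y : L))
    rw [div_eq_div_iff (by simp) ha'] at hy
    rw [map_zsmul, mul_smul_comm, mul_smul_comm, mul_comm, hy]

theorem exists_map_eq_of_smul_eq [Algebra.FormallyUnramified (𝓞 M) (𝓞 L)]
    (hg : ∀ σ, σ ∈ Subgroup.zpowers g) {J : Ideal (𝓞 L)} (hJ0 : J ≠ ⊥) (hJ : g • J = J) :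
    ∃ B : (Ideal (𝓞 M))⁰, (B : Ideal (𝓞 M)).map (algebraMap (𝓞 M) (𝓞 L)) = J := by
  obtain ⟨B, hB⟩ := exists_map_eq_of_forall_smul_eq (A := 𝓞 M) Gal(L/M) hJ0 fun σ =>
    (Subgroup.zpowers_le (H := MulAction.stabilizer Gal(L/M) J)).2 hJ (hg σ)
  refine ⟨⟨B, mem_nonZeroDivisors_iff_ne_zero.2 fun h => hJ0 ?_⟩, hB⟩
  rw [← hB, h]
  exact Ideal.map_bot

theorem exists_isAmbiguityUnit {J : (Ideal (𝓞 L))⁰}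
    (hJ : ClassGroup.mk0 J ∈ ambiguousClasses g) : ∃ e, IsAmbiguityUnit g (J : Ideal (𝓞 L)) e := by
  rw [mem_ambiguousClasses, galoisClass_mk0, ClassGroup.mk0_eq_mk0_iff] at hJ
  obtain ⟨a, b, ha, hb, hab⟩ := hJ
  change Ideal.span {a} * g • (J : Ideal (𝓞 L)) = _ at hab
  have hnorm := congrArg (Ideal.relNorm (𝓞 M)) hab
  rw [map_mul, map_mul, Ideal.relNorm_smul, Ideal.relNorm_singleton, Ideal.relNorm_singleton]
    at hnorm
  have hJ0 : Ideal.relNorm (𝓞 M) (J : Ideal (𝓞 L)) ≠ 0 := fun h =>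
    nonZeroDivisors.coe_ne_zero J (Ideal.relNorm_eq_bot_iff.1 h)
  obtain ⟨e, he⟩ := Ideal.span_singleton_eq_span_singleton.1 (mul_right_cancel₀ hJ0 hnorm)
  exact ⟨e, a, b, ha, hb, hab, by rw [← he, mul_comm]⟩

namespace IsAmbiguityUnit

theorem inv {I I' : Ideal (𝓞 L)} {e : (𝓞 M)ˣ} (h : IsAmbiguityUnit g I e) {n : 𝓞 L} (hn0 : n ≠ 0)
    (hI : I' * I = Ideal.span {n}) : IsAmbiguityUnit g I' e⁻¹ := by
  obtain ⟨a, b, ha, hb, hab, hn⟩ := h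
  have hgI : g • I' * g • I = Ideal.span {g • n} := by rw [← smul_mul', hI, smul_span_singleton]
  refine ⟨b * n, a * g • n, mul_ne_zero hb hn0,
    mul_ne_zero ha ((smul_ne_zero_iff_ne g).2 hn0), ?_, ?_⟩
  · rw [← Ideal.span_singleton_mul_span_singleton, ← Ideal.span_singleton_mul_span_singleton, ← hI,
      ← hgI]
    calc Ideal.span {b} * (I' * I) * g • I' = Ideal.span {b} * I * (I' * g • I') := by ring
      _ = Ideal.span {a} * (g • I' * g • I) * I' := by rw [← hab]; ring
  · rw [map_mul, map_mul, hn, intNorm_smul, ← mul_assoc, ← mul_assoc, Units.inv_mul, one_mul]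

theorem mk0_mem_range_extendedHom [Algebra.FormallyUnramified (𝓞 M) (𝓞 L)]
    (hg : ∀ σ, σ ∈ Subgroup.zpowers g) {I : (Ideal (𝓞 L))⁰} {e : (𝓞 M)ˣ}
    (h : IsAmbiguityUnit g (I : Ideal (𝓞 L)) e) (he : e ∈ (unitNorm M L).range) :
    ClassGroup.mk0 I ∈ (ClassGroup.extendedHom (𝓞 M) (𝓞 L)).range := by
  obtain ⟨a, b, ha, -, hab, hn⟩ := h
  obtain ⟨u, rfl⟩ := he
  obtain ⟨z, hz0, hz⟩ := exists_mul_eq_mul_smul_of_intNorm_eq (a := u * a) (b := b) hg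
    (mul_ne_zero u.ne_zero ha) (by rw [map_mul, hn, coe_unitNorm])
  have hinv : g • (Ideal.span {z} * (I : Ideal (𝓞 L))) = Ideal.span {z} * I := by
    have hua : Ideal.span {(u * a : 𝓞 L)} = Ideal.span {a} :=
      Ideal.span_singleton_mul_left_unit u.isUnit a
    refine mul_left_cancel₀ (a := Ideal.span {(u * a : 𝓞 L)}) (by simpa using ha) ?_
    calc Ideal.span {(u * a : 𝓞 L)} * g • (Ideal.span {z} * (I : Ideal (𝓞 L)))
        = Ideal.span {g • z} * (Ideal.span {a} * g • (I : Ideal (𝓞 L))) := by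
          rw [hua, smul_mul', smul_span_singleton, mul_left_comm]
      _ = Ideal.span {b * g • z} * I := by
          rw [hab, ← mul_assoc, Ideal.span_singleton_mul_span_singleton, mul_comm b]
      _ = _ := by rw [← hz, ← mul_assoc, Ideal.span_singleton_mul_span_singleton]
  obtain ⟨B, hB⟩ := exists_map_eq_of_smul_eq hg
    (mul_ne_zero (by simpa using hz0) (nonZeroDivisors.coe_ne_zero I)) hinv
  refine ⟨ClassGroup.mk0 B, ?_⟩
  rw [ClassGroup.extendedHom_mk0, ClassGroup.mk0_eq_mk0_iff]
  exact ⟨1, z, one_ne_zero, hz0, by simp [hB]⟩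

end IsAmbiguityUnit

theorem relIndex_range_extendedHom_le [Algebra.FormallyUnramified (𝓞 M) (𝓞 L)]
    (hg : ∀ σ, σ ∈ Subgroup.zpowers g) (hfin : (unitNorm M L).range.index ≠ 0) :
    (ClassGroup.extendedHom (𝓞 M) (𝓞 L)).range.relIndex (ambiguousClasses g) ≤
      (unitNorm M L).range.index := by
  have : Finite ((𝓞 M)ˣ ⧸ (unitNorm M L).range) := Subgroup.index_ne_zero_iff_finite.1 hfin
  have hexists (c : ambiguousClasses g) : ∃ (J : (Ideal (𝓞 L))⁰) (e : (𝓞 M)ˣ),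
      ClassGroup.mk0 J = c ∧ IsAmbiguityUnit g (J : Ideal (𝓞 L)) e := by
    obtain ⟨J, hJ⟩ := ClassGroup.mk0_surjective (c : ClassGroup (𝓞 L))
    obtain ⟨e, he⟩ := exists_isAmbiguityUnit (hJ ▸ c.2)
    exact ⟨J, e, hJ, he⟩
  choose J e hJ he using hexists
  refine relIndex_le_card_of_forall _ _ (fun c => (e c : (𝓞 M)ˣ ⧸ _)) fun c c' hcc' => ?_
  obtain ⟨J', hJ'⟩ := ClassGroup.mk0_surjective (ClassGroup.mk0 (J c'))⁻¹
  obtain ⟨n, hn0, hn⟩ := ClassGroup.mk0_eq_mk0_inv_iff.1 hJ'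
  rw [← hJ c, ← hJ c', div_eq_mul_inv, ← hJ', ← map_mul]
  refine ((he c).mul ((he c').inv hn0 hn)).mk0_mem_range_extendedHom (I := J c * J') hg ?_
  rw [← div_eq_mul_inv]
  exact QuotientGroup.eq_iff_div_mem.1 hcc'

theorem exists_map_eq_span_of_unitNorm_eq_one [Algebra.FormallyUnramified (𝓞 M) (𝓞 L)]
    (hg : ∀ σ, σ ∈ Subgroup.zpowers g) {u : (𝓞 L)ˣ} (hu : unitNorm M L u = 1) :
    ∃ (z : 𝓞 L) (B : (Ideal (𝓞 M))⁰), z ≠ 0 ∧ u * z = g • z ∧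
      (B : Ideal (𝓞 M)).map (algebraMap (𝓞 M) (𝓞 L)) = Ideal.span {z} := by
  obtain ⟨z, hz0, hz⟩ := exists_mul_eq_mul_smul_of_intNorm_eq (b := 1) hg u.ne_zero (by
    rw [map_one, ← coe_unitNorm, hu, Units.val_one])
  rw [one_mul] at hz
  obtain ⟨B, hB⟩ := exists_map_eq_of_smul_eq hg (J := Ideal.span {z}) (by simpa using hz0)
    (by rw [smul_span_singleton, ← hz, Ideal.span_singleton_mul_left_unit u.isUnit])
  exact ⟨z, B, hz0, hz, hB⟩

theorem relIndex_range_galoisUnit_div_id_le [Algebra.FormallyUnramified (𝓞 M) (𝓞 L)]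
    (hg : ∀ σ, σ ∈ Subgroup.zpowers g) :
    (galoisUnit g / MonoidHom.id _).range.relIndex (unitNorm M L).ker ≤
      Nat.card (ClassGroup.extendedHom (𝓞 M) (𝓞 L)).ker := by
  choose z B hz0 hz hB using fun u : (unitNorm M L).ker =>
    exists_map_eq_span_of_unitNorm_eq_one hg u.2
  have hker (u) : ClassGroup.mk0 (B u) ∈ (ClassGroup.extendedHom (𝓞 M) (𝓞 L)).ker := by
    rw [MonoidHom.mem_ker, ClassGroup.extendedHom_mk0, ClassGroup.mk0_eq_one_iff, hB]
    exact ⟨_, rfl⟩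
  refine relIndex_le_card_of_forall _ _ (fun u => ⟨_, hker u⟩) fun u v huv => ?_
  obtain ⟨x, y, hx, -, hxy⟩ := ClassGroup.mk0_eq_mk0_iff.1 (congrArg Subtype.val huv)
  have hspan := congrArg (Ideal.map (algebraMap (𝓞 M) (𝓞 L))) hxy
  simp only [Ideal.map_mul, Ideal.map_span, Set.image_singleton, hB,
    Ideal.span_singleton_mul_span_singleton] at hspan
  obtain ⟨w, hw⟩ := Ideal.span_singleton_eq_span_singleton.1 hspan
  have hgw : algebraMap (𝓞 M) (𝓞 L) x * (u.1 * z u) * g • (w : 𝓞 L) =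
      algebraMap (𝓞 M) (𝓞 L) y * (v.1 * z v) := by
    simpa only [smul_mul', smul_algebraMap, hz] using congrArg (g • ·) hw
  refine ⟨w⁻¹, ?_⟩
  rw [MonoidHom.div_apply, MonoidHom.id_apply, map_inv, inv_div_inv, div_eq_div_iff_mul_eq_mul]
  refine Units.ext ?_
  rw [Units.val_mul, Units.val_mul, coe_galoisUnit]
  refine mul_left_cancel₀ (mul_ne_zero (by simpa using hx) (hz0 u) :
    algebraMap (𝓞 M) (𝓞 L) x * z u ≠ 0) ?_
  linear_combination (v.1 : 𝓞 L) * hw - hgw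

end AmbiguousClasses

theorem two_mul_rank_add_one_of_isTotallyComplex (K : Type*) [Field K] [NumberField K]
    [IsTotallyComplex K] : 2 * (Units.rank K + 1) = Module.finrank ℚ K := by
  have hfinrank := IsTotallyComplex.finrank K
  have hcard := InfinitePlace.card_eq_nrRealPlaces_add_nrComplexPlaces K
  rw [IsTotallyComplex.nrRealPlaces_eq_zero K] at hcard
  have hpos : 0 < Module.finrank ℚ K := Module.finrank_pos
  rw [Units.rank]
  omega

section UnitHerbrand

variable {M L : Type*} [Field M] [NumberField M] [Field L] [NumberField L] [Algebra M L]
  [IsGalois M L] {g : Gal(L/M)}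

theorem map_algebraMap_unitNorm (hg : ∀ σ, σ ∈ Subgroup.zpowers g) (u : (𝓞 L)ˣ) :
    Units.map (algebraMap (𝓞 M) (𝓞 L) : 𝓞 M →* 𝓞 L) (unitNorm M L u) =
      ∏ k ∈ Finset.range (Module.finrank M L), (galoisUnit g)^[k] u := by
  have hiterate (k : ℕ) : (((galoisUnit g)^[k] u : (𝓞 L)ˣ) : 𝓞 L) = g ^ k • (u : 𝓞 L) := by
    induction k with
    | zero => rw [Function.iterate_zero_apply, pow_zero, one_smul]
    | succ k ih => rw [Function.iterate_succ_apply', coe_galoisUnit, ih, pow_succ', mul_smul]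
  refine Units.ext ((algebraMap_intNorm_eq_prod hg (u : 𝓞 L)).trans ?_)
  rw [Units.coe_prod]
  exact Finset.prod_congr rfl fun k _ => (hiterate k).symm

theorem mul_index_range_unitNorm_le_relIndex [IsTotallyComplex M] {p : ℕ} [Fact p.Prime]
    (htors : ∀ u : (𝓞 M)ˣ, u ^ p = 1 → u = 1) (hdeg : Module.finrank M L = p)
    (hg : ∀ σ, σ ∈ Subgroup.zpowers g) :
    (unitNorm M L).range.index ≠ 0 ∧ p * (unitNorm M L).range.index ≤
      (galoisUnit g / MonoidHom.id _).range.relIndex (unitNorm M L).ker := by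
  have : IsTotallyComplex L := isTotallyComplex_of_algebra M L
  have hrank : Module.finrank ℤ (Additive (𝓞 L)ˣ) + 1 =
      p * (Module.finrank ℤ (Additive (𝓞 M)ˣ) + 1) := by
    have hM := two_mul_rank_add_one_of_isTotallyComplex M
    have hL := two_mul_rank_add_one_of_isTotallyComplex L
    rw [← Module.finrank_mul_finrank ℚ M L, ← hM, hdeg] at hL
    rw [Units.finrank_eq, Units.finrank_eq]
    linarith
  exact index_range_ne_zero_and_mul_le_relIndex (E := Additive (𝓞 L)ˣ) (F := Additive (𝓞 M)ˣ)
    (N := (unitNorm M L).toAdditive) (g := (galoisUnit g).toAdditive)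
    (i := (Units.map (algebraMap (𝓞 M) (𝓞 L) : 𝓞 M →* 𝓞 L)).toAdditive)
    (fun y => Units.ext ((intNorm_algebraMap (y.toMul : 𝓞 M)).trans (by rw [hdeg]; rfl)))
    (fun x => (map_algebraMap_unitNorm hg x.toMul).trans (by rw [hdeg]; rfl))
    (fun x => Units.ext (intNorm_smul g (x.toMul : 𝓞 L)))
    (fun y => Units.ext (smul_algebraMap g (y.toMul : 𝓞 M)))
    (fun y hy => htors y.toMul hy) hrank.ge

end UnitHerbrand

section ClassNorm

variable {M L : Type} [Field M] [NumberField M] [Field L] [NumberField L] [Algebra M L]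
  [IsGalois M L]

theorem card_ker_extendedHom_le_index_range_unitNorm [Algebra.FormallyUnramified (𝓞 M) (𝓞 L)]
    {g : Gal(L/M)} (hg : ∀ σ, σ ∈ Subgroup.zpowers g) (hfin : (unitNorm M L).range.index ≠ 0)
    (hsurj : Function.Surjective (classNorm M L)) :
    Nat.card (ClassGroup.extendedHom (𝓞 M) (𝓞 L)).ker ≤ (unitNorm M L).range.index := by
  set ext := ClassGroup.extendedHom (𝓞 M) (𝓞 L)
  refine Nat.le_of_mul_le_mul_left ?_ (Nat.card_pos (α := ext.range))
  calc Nat.card ext.range * Nat.card ext.ker = Nat.card (ClassGroup (𝓞 M)) := by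
        rw [mul_comm, ← Subgroup.index_ker, Subgroup.card_mul_index]
    _ ≤ Nat.card (ambiguousClasses g) := card_classGroup_le_card_ambiguousClasses g hsurj
    _ = Nat.card (ext.range.subgroupOf (ambiguousClasses g)) *
        ext.range.relIndex (ambiguousClasses g) := (Subgroup.card_mul_index _).symm
    _ ≤ Nat.card ext.range * (unitNorm M L).range.index :=
        Nat.mul_le_mul (Nat.card_le_card_of_injective (fun x => (⟨x.1.1, x.2⟩ : ext.range))
          fun x y hxy => Subtype.ext (Subtype.ext (Subtype.mk.inj hxy)))
          (relIndex_range_extendedHom_le hg hfin)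

theorem not_surjective_classNorm [IsTotallyComplex M] {p : ℕ} [hp : Fact p.Prime]
    (htors : ∀ u : (𝓞 M)ˣ, u ^ p = 1 → u = 1) (hdeg : Module.finrank M L = p)
    [Algebra.FormallyUnramified (𝓞 M) (𝓞 L)] : ¬ Function.Surjective (classNorm M L) := by
  intro hsurj
  have : IsCyclic Gal(L/M) :=
    isCyclic_of_prime_card ((IsGalois.card_aut_eq_finrank M L).trans hdeg)
  obtain ⟨g, hg⟩ := IsCyclic.exists_generator (α := Gal(L/M))
  obtain ⟨hfin, hle⟩ := mul_index_range_unitNorm_le_relIndex htors hdeg hg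
  refine absurd ?_ (lt_mul_of_one_lt_left (Nat.pos_of_ne_zero hfin) hp.out.one_lt).not_ge
  calc p * (unitNorm M L).range.index
      ≤ (galoisUnit g / MonoidHom.id _).range.relIndex (unitNorm M L).ker := hle
    _ ≤ Nat.card (ClassGroup.extendedHom (𝓞 M) (𝓞 L)).ker := relIndex_range_galoisUnit_div_id_le hg
    _ ≤ (unitNorm M L).range.index :=
        card_ker_extendedHom_le_index_range_unitNorm hg hfin hsurj

end ClassNorm

/-! ### Class groups and unramified `(ℤ/p)²`-extensions -/

section Rank

theorem exists_injective_zmod_prod_or_card_dvd (p : ℕ) [Fact p.Prime] (V : Type*) [AddCommGroup V]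
    [Module (ZMod p) V] [Finite V] :
    (∃ f : ZMod p × ZMod p →ₗ[ZMod p] V, Function.Injective f) ∨ Nat.card V ∣ p := by
  have hV : Nat.card V = p ^ Module.finrank (ZMod p) V := by
    rw [Module.natCard_eq_pow_finrank (K := ZMod p), Nat.card_zmod]
  rcases le_or_gt 2 (Module.finrank (ZMod p) V) with htwo | hlt
  · left
    have : Nontrivial V := Module.nontrivial_of_finrank_pos (R := ZMod p) (by lia)
    obtain ⟨x, hx⟩ := exists_ne (0 : V)
    obtain ⟨y, hxy⟩ := exists_linearIndependent_pair_of_one_lt_finrank (R := ZMod p) htwo hx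
    refine ⟨(LinearMap.toSpanSingleton (ZMod p) V x).coprod
      (LinearMap.toSpanSingleton (ZMod p) V y), (injective_iff_map_eq_zero _).2 fun z hz => ?_⟩
    exact Prod.ext_iff.2 (LinearIndependent.pair_iff.1 hxy z.1 z.2 (by simpa using hz))
  · right
    rw [hV]
    exact (pow_dvd_pow p (Nat.le_of_lt_succ hlt)).trans (by simp)

theorem exists_injective_zmod_prod_or_index_range_powMonoidHom_dvd (p : ℕ) [Fact p.Prime]
    (A : Type*) [CommGroup A] [Finite A] :
    (∃ f : Multiplicative (ZMod p × ZMod p) →* A, Function.Injective f) ∨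
      (powMonoidHom p : A →* A).range.index ∣ p := by
  let V := Additive (powMonoidHom p : A →* A).ker
  let : Module (ZMod p) V := AddCommGroup.zmodModule fun x => Subtype.ext x.toMul.2
  have : Finite V := inferInstanceAs (Finite (powMonoidHom p : A →* A).ker)
  rcases exists_injective_zmod_prod_or_card_dvd p V with ⟨f, hf⟩ | hcard
  · exact .inl ⟨(powMonoidHom p : A →* A).ker.subtype.comp
      (AddMonoidHom.toMultiplicativeLeft f.toAddMonoidHom), Subtype.val_injective.comp hf⟩
  · exact .inr (by rwa [index_range_eq_card_ker_of_finite])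

theorem exists_surjective_addMonoidHom_zmod_apply_eq_zero (p : ℕ) [Fact p.Prime]
    (v : ZMod p × ZMod p) : ∃ c : ZMod p × ZMod p →+ ZMod p, Function.Surjective c ∧ c v = 0 := by
  by_cases hv : v.1 = 0
  · exact ⟨AddMonoidHom.fst _ _, fun y => ⟨(y, 0), rfl⟩, hv⟩
  · refine ⟨(AddMonoidHom.mulLeft v.2).coprod (AddMonoidHom.mulLeft (-v.1)),
      fun y => ⟨(0, -v.1⁻¹ * y), by simp [hv]⟩, ?_⟩
    simp [mul_comm]

end Rank

section Ramification

theorem finite_residueField_under (A : Type*) {B : Type*} [CommRing A] [IsDedekindDomain A]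
    [CommRing B] [IsDomain B] [Algebra A B] [Module.IsTorsionFree A B] [Algebra.IsIntegral A B]
    [Module.Free ℤ A] [Module.Finite ℤ A] {P : Ideal B} [P.IsPrime] (hP : P ≠ ⊥) :
    Finite (P.under A).ResidueField := by
  have hunder : P.under A ≠ ⊥ := mt Ideal.eq_bot_of_comap_eq_bot hP
  have : (P.under A).IsMaximal := Ideal.IsPrime.isMaximal inferInstance hunder
  have : Finite (A ⧸ P.under A) := Ideal.finiteQuotientOfFreeOfNeBot _ hunder
  infer_instance

variable {M N : Type*} [Field M] [NumberField M] [Field N] [NumberField N] [Algebra M N]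

theorem formallyUnramified_of_forall_ramificationIdx_eq_one
    (h : ∀ P : Ideal (𝓞 N), P.IsPrime → P ≠ ⊥ → P.ramificationIdx (𝓞 M) = 1) :
    Algebra.FormallyUnramified (𝓞 M) (𝓞 N) := by
  rw [← Algebra.unramifiedLocus_eq_univ_iff, Set.eq_univ_iff_forall]
  rintro ⟨P, hP⟩
  change Algebra.IsUnramifiedAt _ _
  by_cases hP0 : P = ⊥
  · subst hP0
    exact Algebra.isUnramifiedAt_bot
  · have := finite_residueField_under (𝓞 M) hP0
    exact Ideal.ramificationIdx_eq_one_iff.1 (h P hP hP0)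

variable [IsGalois M N]

theorem ramificationIdx_eq_card_inertia {Q : Ideal (𝓞 N)} [Q.IsPrime] (hQ : Q ≠ ⊥) :
    Q.ramificationIdx (𝓞 M) = Nat.card (Q.inertia Gal(N/M)) := by
  have : (Q.under (𝓞 M)).IsMaximal :=
    Ideal.IsPrime.isMaximal inferInstance (mt Ideal.eq_bot_of_comap_eq_bot hQ)
  have := finite_residueField_under (𝓞 M) hQ
  rw [Ideal.card_inertia_eq_ramificationIdxIn (G := Gal(N/M)) (Q.under (𝓞 M)) Q,
    Ideal.ramificationIdxIn_eq_ramificationIdx (Q.under (𝓞 M)) Q Gal(N/M)]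

theorem ramificationIdx_eq_one_of_inertia_le_fixingSubgroup {L : IntermediateField M N}
    {P : Ideal (𝓞 L)} [P.IsPrime] (hP : P ≠ ⊥) {Q : Ideal (𝓞 N)} [Q.IsPrime] [Q.LiesOver P]
    (hI : Q.inertia Gal(N/M) ≤ L.fixingSubgroup) : P.ramificationIdx (𝓞 M) = 1 := by
  have hQ : Q ≠ ⊥ := Ideal.ne_bot_of_liesOver_of_ne_bot hP Q
  have htower : Nat.card (Q.inertia Gal(N/M)) =
      P.ramificationIdx (𝓞 M) * Nat.card (Q.inertia Gal(N/L)) := by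
    rw [← ramificationIdx_eq_card_inertia hQ, ← ramificationIdx_eq_card_inertia hQ]
    exact Ideal.ramificationIdx_tower (R := 𝓞 M) P Q
  have hle : Nat.card (Q.inertia Gal(N/M)) ≤ Nat.card (Q.inertia Gal(N/L)) :=
    Nat.card_le_card_of_injective
      (fun σ => (⟨IntermediateField.fixingSubgroupEquiv L ⟨σ.1, hI σ.2⟩, σ.2⟩ :
        Q.inertia Gal(N/L))) fun σ τ hστ =>
      Subtype.ext (Subtype.mk.inj
        ((IntermediateField.fixingSubgroupEquiv L).injective (Subtype.mk.inj hστ)))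
  have hpos : 0 < Nat.card (Q.inertia Gal(N/M)) := Nat.card_pos
  have hne : P.ramificationIdx (𝓞 M) ≠ 0 := by
    intro hzero
    rw [hzero, zero_mul] at htower
    exact hpos.ne' htower
  have hpos' : 0 < Nat.card (Q.inertia Gal(N/L)) := Nat.card_pos
  exact le_antisymm (Nat.le_of_mul_le_mul_right (by rwa [one_mul, ← htower]) hpos')
    (Nat.one_le_iff_ne_zero.2 hne)

theorem formallyUnramified_fixedField {H : Subgroup Gal(N/M)}
    (hI : ∀ Q : Ideal (𝓞 N), Q.IsPrime → Q ≠ ⊥ → Q.inertia Gal(N/M) ≤ H) :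
    Algebra.FormallyUnramified (𝓞 M) (𝓞 (IntermediateField.fixedField H)) := by
  refine formallyUnramified_of_forall_ramificationIdx_eq_one fun P hP hP0 => ?_
  have := hP.isMaximal hP0
  obtain ⟨Q, hQ, hQP⟩ := Ideal.exists_maximal_ideal_liesOver_of_isIntegral (S := 𝓞 N) P
  refine ramificationIdx_eq_one_of_inertia_le_fixingSubgroup hP0 (Q := Q) ?_
  rw [IntermediateField.fixingSubgroup_fixedField]
  exact hI Q hQ.isPrime (Ideal.ne_bot_of_liesOver_of_ne_bot hP0 Q)

end Ramification

section SplitPrimes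

theorem natCard_le_of_forall_pow_eq {k : Type*} [Field k] [Finite k] {q : ℕ}
    (hq : 1 < q) (h : ∀ z : k, z ^ q = z) : Nat.card k ≤ q := by
  classical
  let : Fintype k := Fintype.ofFinite k
  have hne := FiniteField.X_pow_card_sub_X_ne_zero k hq
  have hroots : (Finset.univ : Finset k) ⊆
      (Polynomial.X ^ q - Polynomial.X : Polynomial k).roots.toFinset := fun z _ => by
    rw [Multiset.mem_toFinset, Polynomial.mem_roots hne]
    simp [h z]
  calc Nat.card k = (Finset.univ : Finset k).card := by
        rw [Nat.card_eq_fintype_card, Finset.card_univ]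
    _ ≤ _ := Finset.card_le_card hroots
    _ ≤ _ := Multiset.toFinset_card_le _
    _ ≤ _ := Polynomial.card_roots' _
    _ = q := FiniteField.X_pow_card_sub_X_natDegree_eq k hq

theorem inertiaDeg_eq_one_of_forall_pow_sub_mem {M L : Type*} [Field M] [NumberField M] [Field L]
    [NumberField L] [Algebra M L] {P : Ideal (𝓞 L)} [P.IsMaximal] (hP : P ≠ ⊥)
    (h : ∀ z : 𝓞 L, z ^ Nat.card (𝓞 M ⧸ P.under (𝓞 M)) - z ∈ P) : P.inertiaDeg (𝓞 M) = 1 := by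
  have hunder : P.under (𝓞 M) ≠ ⊥ := mt Ideal.eq_bot_of_comap_eq_bot hP
  have : (P.under (𝓞 M)).IsMaximal := Ideal.IsPrime.isMaximal inferInstance hunder
  have : Finite (𝓞 M ⧸ P.under (𝓞 M)) := Ideal.finiteQuotientOfFreeOfNeBot _ hunder
  have : Finite (𝓞 L ⧸ P) := Ideal.finiteQuotientOfFreeOfNeBot _ hP
  have hpow : Nat.card (𝓞 M ⧸ P.under (𝓞 M)) ^ P.inertiaDeg (𝓞 M) = Nat.card (𝓞 L ⧸ P) :=
    Ideal.cardQuot_pow_inertiaDeg (P.under (𝓞 M)) P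
  let : Field (𝓞 L ⧸ P) := Ideal.Quotient.field P
  have hcard : Nat.card (𝓞 L ⧸ P) ≤ Nat.card (𝓞 M ⧸ P.under (𝓞 M)) := by
    refine natCard_le_of_forall_pow_eq Finite.one_lt_card fun z => ?_
    obtain ⟨z, rfl⟩ := Ideal.Quotient.mk_surjective z
    rw [← map_pow]
    exact Ideal.Quotient.eq.2 (h z)
  refine le_antisymm ?_ (Nat.one_le_iff_ne_zero.2 fun hzero => ?_)
  · rw [← hpow] at hcard
    exact (Nat.pow_le_pow_iff_right Finite.one_lt_card).1 (hcard.trans_eq (pow_one _).symm)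
  · rw [hzero, pow_zero] at hpow
    exact (Finite.one_lt_card (α := 𝓞 L ⧸ P)).ne hpow

theorem mk0_under_mem_range_classNorm {M N : Type*} [Field M] [NumberField M] [Field N]
    [NumberField N] [Algebra M N] [IsGalois M N] {L : IntermediateField M N} {Q : Ideal (𝓞 N)}
    [Q.IsMaximal] (hQ : Q ≠ ⊥) {φ : Gal(N/M)} (hφ : IsArithFrobAt (𝓞 M) φ Q)
    (hL : φ ∈ L.fixingSubgroup) {P : (Ideal (𝓞 M))⁰} (hP : (P : Ideal (𝓞 M)) = Q.under (𝓞 M)) :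
    ClassGroup.mk0 P ∈ (classNorm M L).range := by
  have hQL : Q.under (𝓞 L) ≠ ⊥ := mt Ideal.eq_bot_of_comap_eq_bot hQ
  have : (Q.under (𝓞 L)).IsMaximal := Ideal.IsPrime.isMaximal inferInstance hQL
  have : ((Q.under (𝓞 L)).under (𝓞 M)).IsMaximal :=
    Ideal.IsPrime.isMaximal inferInstance (mt Ideal.eq_bot_of_comap_eq_bot hQL)
  have hunder : (Q.under (𝓞 L)).under (𝓞 M) = Q.under (𝓞 M) := Ideal.under_under Q
  have hdeg : (Q.under (𝓞 L)).inertiaDeg (𝓞 M) = 1 := by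
    refine inertiaDeg_eq_one_of_forall_pow_sub_mem hQL fun z => ?_
    have hfrob : φ • algebraMap (𝓞 L) (𝓞 N) z - _ ∈ Q := hφ (algebraMap (𝓞 L) (𝓞 N) z)
    have hfix : φ • algebraMap (𝓞 L) (𝓞 N) z = algebraMap (𝓞 L) (𝓞 N) z :=
      RingOfIntegers.ext (hL (z : L))
    rw [hunder, Ideal.under, Ideal.mem_comap, map_sub, map_pow, ← neg_mem_iff, neg_sub]
    rwa [hfix] at hfrob
  refine ⟨ClassGroup.mk0 ⟨Q.under (𝓞 L), mem_nonZeroDivisors_iff_ne_zero.2 hQL⟩, ?_⟩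
  rw [classNorm_mk0]
  refine congrArg _ (Subtype.ext ?_)
  have hnorm := Ideal.relNorm_eq_pow_of_isMaximal (Q.under (𝓞 L)) ((Q.under (𝓞 L)).under (𝓞 M))
  rwa [hdeg, pow_one, hunder, ← hP] at hnorm

end SplitPrimes

section NormGroups

theorem subgroup_classGroup_eq_top {R : Type*} [CommRing R] [IsDedekindDomain R]
    {H : Subgroup (ClassGroup R)}
    (h : ∀ P : (Ideal R)⁰, Prime (P : Ideal R) → ClassGroup.mk0 P ∈ H) : H = ⊤ := by
  have hmem : ∀ (I : Ideal R) (hI : I ∈ (Ideal R)⁰), ClassGroup.mk0 ⟨I, hI⟩ ∈ H := by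
    intro I
    induction I using UniqueFactorizationMonoid.induction_on_prime with
    | h₁ => exact fun hI => absurd rfl (mem_nonZeroDivisors_iff_ne_zero.1 hI)
    | h₂ I hunit =>
      intro hI
      obtain rfl : I = 1 := (Ideal.isUnit_iff.1 hunit).trans Ideal.one_eq_top.symm
      exact (map_one (ClassGroup.mk0 (R := R))).symm ▸ one_mem H
    | h₃ I P hI hP ih =>
      intro _
      have hP0 : P ∈ (Ideal R)⁰ := mem_nonZeroDivisors_iff_ne_zero.2 hP.ne_zero
      have hI0 : I ∈ (Ideal R)⁰ := mem_nonZeroDivisors_iff_ne_zero.2 hI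
      exact map_mul ClassGroup.mk0 (⟨P, hP0⟩ : (Ideal R)⁰) ⟨I, hI0⟩ ▸
        mul_mem (h ⟨P, hP0⟩ hP) (ih hI0)
  refine top_le_iff.1 fun x _ => ?_
  obtain ⟨I, rfl⟩ := ClassGroup.mk0_surjective x
  exact hmem I I.2

theorem range_powMonoidHom_finrank_le_range_classNorm (M L : Type*) [Field M] [NumberField M]
    [Field L] [NumberField L] [Algebra M L] [IsGalois M L] :
    (powMonoidHom (Module.finrank M L) : ClassGroup (𝓞 M) →* ClassGroup (𝓞 M)).range ≤
      (classNorm M L).range := by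
  rintro _ ⟨c, rfl⟩
  obtain ⟨I, rfl⟩ := ClassGroup.mk0_surjective c
  refine ⟨ClassGroup.extendedHom (𝓞 M) (𝓞 L) (ClassGroup.mk0 I), ?_⟩
  rw [ClassGroup.extendedHom_mk0, classNorm_mk0, powMonoidHom_apply, ← map_pow]
  refine congrArg _ (Subtype.ext ((Ideal.relNorm_algebraMap (𝓞 L) (I : Ideal (𝓞 M))).trans ?_))
  rw [IsFractionRing.finrank_eq (𝓞 M) M (𝓞 L) L]
  rfl

variable {M N : Type} [Field M] [NumberField M] [Field N] [NumberField N] [Algebra M N]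
  [IsGalois M N] [IsTotallyComplex M] {p : ℕ} [hp : Fact p.Prime]

theorem range_classNorm_fixedField_ne_top_and_eq (htors : ∀ u : (𝓞 M)ˣ, u ^ p = 1 → u = 1)
    (hdvd : (powMonoidHom p : ClassGroup (𝓞 M) →* ClassGroup (𝓞 M)).range.index ∣ p)
    {χ : Gal(N/M) →* Multiplicative (ZMod p)} (hχ : Function.Surjective χ)
    (hI : ∀ Q : Ideal (𝓞 N), Q.IsPrime → Q ≠ ⊥ → Q.inertia Gal(N/M) ≤ χ.ker) :
    (classNorm M (IntermediateField.fixedField χ.ker)).range ≠ ⊤ ∧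
      (classNorm M (IntermediateField.fixedField χ.ker)).range =
        (powMonoidHom p : ClassGroup (𝓞 M) →* ClassGroup (𝓞 M)).range := by
  have hdeg : Module.finrank M (IntermediateField.fixedField χ.ker) = p := by
    rw [IntermediateField.finrank_eq_fixingSubgroup_index,
      IntermediateField.fixingSubgroup_fixedField, Subgroup.index_ker, χ.range_eq_top.2 hχ]
    simp
  have := formallyUnramified_fixedField hI
  have hpow := range_powMonoidHom_finrank_le_range_classNorm M
    (IntermediateField.fixedField χ.ker)
  rw [hdeg] at hpow
  have hne : (classNorm M (IntermediateField.fixedField χ.ker)).range ≠ ⊤ :=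
    mt MonoidHom.range_eq_top.1 (not_surjective_classNorm htors hdeg)
  refine ⟨hne, (le_antisymm hpow (Subgroup.relIndex_eq_one.1 ?_)).symm⟩
  have hmul := Subgroup.relIndex_mul_index hpow
  have hindex : (classNorm M (IntermediateField.fixedField χ.ker)).range.index = p :=
    ((Nat.dvd_prime hp.out).1 ((Dvd.intro_left _ hmul).trans hdvd)).resolve_left
      (mt Subgroup.index_eq_one.1 hne)
  rw [← hmul, hindex] at hdvd
  exact Nat.dvd_one.1 (Nat.dvd_of_mul_dvd_mul_right hp.out.pos (by rwa [one_mul]))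

theorem exists_injective_classGroup_of_surjective (htors : ∀ u : (𝓞 M)ˣ, u ^ p = 1 → u = 1)
    {π : Gal(N/M) →* Multiplicative (ZMod p × ZMod p)} (hπ : Function.Surjective π)
    (hI : ∀ Q : Ideal (𝓞 N), Q.IsPrime → Q ≠ ⊥ → Q.inertia Gal(N/M) ≤ π.ker) :
    ∃ f : Multiplicative (ZMod p × ZMod p) →* ClassGroup (𝓞 M), Function.Injective f := by
  refine (exists_injective_zmod_prod_or_index_range_powMonoidHom_dvd p
    (ClassGroup (𝓞 M))).resolve_right fun hdvd => ?_
  have hnormGroup : ∀ c : ZMod p × ZMod p →+ ZMod p, Function.Surjective c → _ := fun c hc =>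
    range_classNorm_fixedField_ne_top_and_eq htors hdvd
      (χ := (AddMonoidHom.toMultiplicative c).comp π) (hc.comp hπ)
      fun Q hQ hQ0 => (hI Q hQ hQ0).trans fun σ (hσ : π σ = 1) => by
        rw [MonoidHom.mem_ker, MonoidHom.comp_apply, hσ, map_one]
  obtain ⟨c₀, hc₀, -⟩ := exists_surjective_addMonoidHom_zmod_apply_eq_zero p 0
  refine (hnormGroup c₀ hc₀).1 ((hnormGroup c₀ hc₀).2.trans
    (subgroup_classGroup_eq_top fun P hP => ?_))
  have hP0 : (P : Ideal (𝓞 M)) ≠ ⊥ := nonZeroDivisors.coe_ne_zero P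
  have := (Ideal.isPrime_of_prime hP).isMaximal hP0
  obtain ⟨Q, hQ, hQP⟩ :=
    Ideal.exists_maximal_ideal_liesOver_of_isIntegral (S := 𝓞 N) (P : Ideal (𝓞 M))
  have hQ0 : Q ≠ ⊥ := Ideal.ne_bot_of_liesOver_of_ne_bot hP0 Q
  have : Finite (𝓞 N ⧸ Q) := Ideal.finiteQuotientOfFreeOfNeBot _ hQ0
  obtain ⟨φ, hφ⟩ := IsArithFrobAt.exists_of_isInvariant (𝓞 M) Gal(N/M) Q
  obtain ⟨c, hc, hcφ⟩ := exists_surjective_addMonoidHom_zmod_apply_eq_zero p (π φ).toAdd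
  rw [← (hnormGroup c hc).2]
  refine mk0_under_mem_range_classNorm hQ0 hφ ?_ hQP.over
  rw [IntermediateField.fixingSubgroup_fixedField]
  exact Multiplicative.toAdd.injective hcφ

end NormGroups

/-! ### The Pell equation and explicit Frobenius data -/

/-- Multiplication by the unit `(123 + 11√125) / 2` in the coordinates
`(u, v) ↦ u + v (1 + √125) / 2`. -/
def pellStep {R : Type*} [CommSemiring R] (x : R × R) : R × R :=
  (56 * x.1 + 341 * x.2, 11 * x.1 + 67 * x.2)

theorem map_pellStep_iterate {R S : Type*} [CommSemiring R] [CommSemiring S] (f : R →+* S) (k : ℕ)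
    (x : R × R) : Prod.map f f (pellStep^[k] x) = pellStep^[k] (Prod.map f f x) :=
  Function.Semiconj.iterate_right (f := Prod.map f f) (fun y => by
    simp only [pellStep, Prod.map_fst, Prod.map_snd, Prod.map_apply, map_add, map_mul,
      map_ofNat]) k x

theorem natCast_pellStep_iterate_of_mod_eq {q m k j : ℕ}
    (hm : pellStep^[m] ((1, 0) : ZMod q × ZMod q) = (1, 0)) (hkj : k % m = j) :
    (((pellStep^[k] (1, 0)).1 : ℕ) : ZMod q) = (pellStep^[j] (1, 0)).1 ∧
      (((pellStep^[k] (1, 0)).2 : ℕ) : ZMod q) = (pellStep^[j] (1, 0)).2 := by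
  have hmap := map_pellStep_iterate (Nat.castRingHom (ZMod q)) k (1, 0)
  rw [Prod.map_apply (x := 1) (y := 0), map_one, map_zero,
    ← Function.IsPeriodicPt.iterate_mod_apply (n := m) hm, hkj] at hmap
  exact ⟨congrArg Prod.fst hmap, congrArg Prod.snd hmap⟩

theorem exists_eq_pellStep_iterate (v : ℕ) : ∀ u : ℕ, (u : ℤ) ^ 2 + u * v - 31 * v ^ 2 = 1 →
    ∃ k, (u, v) = pellStep^[k] (1, 0) := by
  induction v using Nat.strong_induction_on with
  | _ v ih =>
    intro u huv
    rcases Nat.eq_zero_or_pos v with rfl | hv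
    · have hu : u = 1 := by
        have : (0 : ℤ) ≤ u := by positivity
        zify at huv ⊢
        nlinarith
      exact ⟨0, by simp [hu]⟩
    have hv' : (1 : ℤ) ≤ v := by exact_mod_cast hv
    have hlower : 5 * (v : ℤ) < u := by nlinarith
    rcases lt_or_ge v 11 with hv11 | hv11
    · have hupper : u < 6 * v := by
        have : (u : ℤ) < 6 * v := by nlinarith
        exact_mod_cast this
      exfalso
      interval_cases v <;> interval_cases u <;> simp at huv
    · have : (11 : ℤ) ≤ v := by exact_mod_cast hv11
      have hupper : 11 * (u : ℤ) ≤ 56 * v := by nlinarith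
      have hlower' : 341 * (v : ℤ) ≤ 67 * u := by nlinarith
      obtain ⟨k, hk⟩ := ih (56 * v - 11 * u) (by omega) (67 * u - 341 * v) (by
        rw [Nat.cast_sub (by omega), Nat.cast_sub (by omega)]
        push_cast
        linear_combination huv)
      refine ⟨k + 1, ?_⟩
      rw [Function.iterate_succ_apply', ← hk]
      simp only [pellStep, Prod.mk.injEq]
      omega

/-- A root `e` modulo `q` of `X² - tX + 1` whose power residue symbol, of order dividing `5`, is
`c ^ n`. -/
def HasResidueExponent {q : ℕ} (c : ZMod q) (t : ZMod q) (n : ℕ) : Prop :=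
  ∃ e : ZMod q, e ^ 2 - t * e + 1 = 0 ∧ 2 * e ≠ t ∧ e ^ ((q - 1) / 5) = c ^ n

/-- Some prime `q ≡ 1 (mod 5)` witnesses that the Kummer characters attached to fifth roots of the
units of traces `t` and `t'` take the values `n` and `n'` on a Frobenius element at `q`, up to signs
and a common factor. -/
def HasKummerWitness (t t' : ℤ) (n n' : ℕ) : Prop :=
  ∃ q : ℕ, q.Prime ∧ 5 ∣ q - 1 ∧ ∃ c : ZMod q, c ^ 5 = 1 ∧ c ≠ 1 ∧
    HasResidueExponent c t n ∧ HasResidueExponent c t' n'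

/-- Two Kummer witnesses for the traces `t` and `t'` whose pairs of values are linearly independent
over `ZMod 5`, whatever the signs of the four values. -/
def HasIndependentKummerWitnesses (t t' : ℤ) : Prop :=
  ∃ n₁ n₁' n₂ n₂' : ℕ, HasKummerWitness t t' n₁ n₁' ∧ HasKummerWitness t t' n₂ n₂' ∧
    ((n₁ : ZMod 5) * n₂') ^ 2 ≠ (n₂ * n₁') ^ 2

theorem hasKummerWitness_pellStep_iterate {q m k j n n' : ℕ} (hq : q.Prime) (hq5 : 5 ∣ q - 1)
    (hm : pellStep^[m] ((1, 0) : ZMod q × ZMod q) = (1, 0)) (hkj : k % m = j) {c : ZMod q}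
    (hc : c ^ 5 = 1 ∧ c ≠ 1)
    (hn : HasResidueExponent c (2 * (pellStep^[j] (1, 0)).1 + 2 * (pellStep^[j] (1, 0)).2) n)
    (hn' : HasResidueExponent c
      (2 * (pellStep^[j] (1, 0)).1 + 126 * (pellStep^[j] (1, 0)).2) n') :
    HasKummerWitness (2 * (pellStep^[k] (1, 0) : ℕ × ℕ).1 + 2 * (pellStep^[k] (1, 0) : ℕ × ℕ).2)
      (2 * (pellStep^[k] (1, 0) : ℕ × ℕ).1 + 126 * (pellStep^[k] (1, 0) : ℕ × ℕ).2) n n' := by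
  obtain ⟨hu, hv⟩ := natCast_pellStep_iterate_of_mod_eq hm hkj
  refine ⟨q, hq, hq5, c, hc.1, hc.2, ?_, ?_⟩ <;> push_cast <;> rwa [hu, hv]

theorem mod_fifty_of_dvd_pellStep_iterate {k : ℕ}
    (h25 : 25 ∣ (pellStep^[k] (1, 0) : ℕ × ℕ).1 + (pellStep^[k] (1, 0) : ℕ × ℕ).2) :
    k % 50 = 7 ∨ k % 50 = 32 := by
  obtain ⟨hu, hv⟩ :=
    natCast_pellStep_iterate_of_mod_eq (q := 25) (m := 50) (k := k) (by decide +kernel) rfl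
  have hsum : ∀ j < 50,
      (pellStep^[j] ((1, 0) : ZMod 25 × ZMod 25)).1 + (pellStep^[j] (1, 0)).2 = 0 →
      j = 7 ∨ j = 32 := by decide +kernel
  refine hsum _ (Nat.mod_lt _ (by norm_num)) ?_
  rw [← hu, ← hv, ← Nat.cast_add, ZMod.natCast_eq_zero_iff]
  exact h25

theorem hasIndependentKummerWitnesses_of_pell {u v : ℕ}
    (huv : (u : ℤ) ^ 2 + u * v - 31 * v ^ 2 = 1) (h25 : 25 ∣ u + v) :
    HasIndependentKummerWitnesses (2 * u + 2 * v) (2 * u + 126 * v) := by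
  obtain ⟨k, hk⟩ := exists_eq_pellStep_iterate v u huv
  obtain ⟨rfl, rfl⟩ := Prod.mk.inj hk
  have hk50 := mod_fifty_of_dvd_pellStep_iterate h25
  have h2251 : pellStep^[75] ((1, 0) : ZMod 2251 × ZMod 2251) = (1, 0) := by decide +kernel
  have h751 : pellStep^[75] ((1, 0) : ZMod 751 × ZMod 751) = (1, 0) := by decide +kernel
  have h12301 : pellStep^[15] ((1, 0) : ZMod 12301 × ZMod 12301) = (1, 0) := by decide +kernel
  have h18451 : pellStep^[15] ((1, 0) : ZMod 18451 × ZMod 18451) = (1, 0) := by decide +kernel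
  have hk75 : k % 75 = 7 ∨ k % 75 = 57 ∨ k % 75 = 32 := by omega
  rcases hk75 with hk | hk | hk
  · refine ⟨1, 0, 1, 2,
      hasKummerWitness_pellStep_iterate (by norm_num) (by norm_num) h2251 hk (c := 2232)
        ?_ ⟨1483, ?_⟩ ⟨838, ?_⟩,
      hasKummerWitness_pellStep_iterate (by norm_num) (by norm_num) h12301
        (show k % 15 = 7 by omega) (c := 10095) ?_ ⟨3166, ?_⟩ ⟨9900, ?_⟩, ?_⟩ <;> decide +kernel
  · refine ⟨1, 0, 1, 1,
      hasKummerWitness_pellStep_iterate (by norm_num) (by norm_num) h2251 hk (c := 2014)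
        ?_ ⟨1397, ?_⟩ ⟨1199, ?_⟩,
      hasKummerWitness_pellStep_iterate (by norm_num) (by norm_num) h18451
        (show k % 15 = 12 by omega) (c := 844) ?_ ⟨2919, ?_⟩ ⟨9056, ?_⟩, ?_⟩ <;> decide +kernel
  · refine ⟨1, 3, 1, 4,
      hasKummerWitness_pellStep_iterate (by norm_num) (by norm_num) h751 hk (c := 460)
        ?_ ⟨38, ?_⟩ ⟨431, ?_⟩,
      hasKummerWitness_pellStep_iterate (by norm_num) (by norm_num) h18451
        (show k % 15 = 2 by omega) (c := 844) ?_ ⟨6577, ?_⟩ ⟨4245, ?_⟩, ?_⟩ <;> decide +kernel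

/-! ### Kummer characters -/

section KummerHom

variable {G K : Type*} [Group G] [Field K] [MulSemiringAction G K] {ζ θ : K} {n : ℕ}

theorem primitiveRoot_zpow_eq_zpow_iff (hζ : IsPrimitiveRoot ζ n) (hn : n ≠ 0) (a b : ℤ) :
    ζ ^ a = ζ ^ b ↔ (a : ZMod n) = b := by
  rw [← sub_eq_zero (a := (a : ZMod n)), ← Int.cast_sub, ZMod.intCast_zmod_eq_zero_iff_dvd,
    ← hζ.zpow_eq_one_iff_dvd, zpow_sub₀ (hζ.ne_zero hn),
    div_eq_one_iff_eq (zpow_ne_zero _ (hζ.ne_zero hn))]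

/-- The element `σ` acts on `ζ` through the sign `s`, and on the radical `θ` through the same sign
up to the factor `ζ ^ k`; the latter condition is written multiplicatively, with `s` moved to the
left-hand side. -/
def IsKummerExponent (ζ θ : K) (σ : G) (s : ℤˣ) (k : ℤ) : Prop :=
  σ • ζ = ζ ^ (s : ℤ) ∧ (σ • θ) ^ (s : ℤ) = ζ ^ k * θ

namespace IsKummerExponent

variable {σ τ : G} {s s' : ℤˣ} {k k' : ℤ}

theorem mul (hζ : ζ ≠ 0) (hσ : IsKummerExponent ζ θ σ s k) (hτ : IsKummerExponent ζ θ τ s' k') :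
    IsKummerExponent ζ θ (σ * τ) (s * s') (k + k') := by
  have hs : (s : ℤ) * s = 1 := by rw [← Units.val_mul, Int.units_mul_self, Units.val_one]
  constructor
  · rw [mul_smul, hτ.1, smul_zpow₀', hσ.1, Units.val_mul, zpow_mul]
  · rw [Units.val_mul, mul_smul, mul_comm (s : ℤ), zpow_mul, ← smul_zpow₀', hτ.2, smul_mul',
      smul_zpow₀', hσ.1, mul_zpow, hσ.2, ← zpow_mul, ← zpow_mul, mul_left_comm, mul_comm k',
      ← mul_assoc (s : ℤ), hs, one_mul, ← mul_assoc, zpow_add₀ hζ]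

theorem sign_eq (hn : 2 < n) (hζ : IsPrimitiveRoot ζ n) (hs : IsKummerExponent ζ θ σ s k)
    (hs' : IsKummerExponent ζ θ σ s' k') : s = s' := by
  have : Fact (2 < n) := ⟨hn⟩
  have hcast := (primitiveRoot_zpow_eq_zpow_iff hζ (by lia) s s').1 (hs.1.symm.trans hs'.1)
  rcases Int.units_eq_one_or s with rfl | rfl <;> rcases Int.units_eq_one_or s' with rfl | rfl
  · rfl
  · exact absurd hcast.symm (by simpa using ZMod.neg_one_ne_one)
  · exact absurd hcast (by simpa using ZMod.neg_one_ne_one)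
  · rfl

theorem intCast_eq (hn : 2 < n) (hζ : IsPrimitiveRoot ζ n) (hθ : θ ≠ 0)
    (hk : IsKummerExponent ζ θ σ s k) (hk' : IsKummerExponent ζ θ σ s' k') :
    (k : ZMod n) = k' := by
  obtain rfl := hk.sign_eq hn hζ hk'
  exact (primitiveRoot_zpow_eq_zpow_iff hζ (by lia) k k').1
    (mul_right_cancel₀ hθ (hk.2.symm.trans hk'.2))

end IsKummerExponent

theorem exists_isKummerExponent (hθ : θ ≠ 0) {σ : G}
    (h : (σ • ζ = ζ ∧ ∃ k : ℕ, σ • θ = ζ ^ k * θ) ∨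
      (σ • ζ = ζ⁻¹ ∧ ∃ k : ℕ, σ • θ * θ = ζ ^ k)) :
    ∃ s k, IsKummerExponent ζ θ σ s k := by
  rcases h with ⟨hσζ, k, hk⟩ | ⟨hσζ, k, hk⟩
  · exact ⟨1, k, by simpa using hσζ, by simpa using hk⟩
  · refine ⟨-1, -k, by simpa using hσζ, ?_⟩
    rw [Units.val_neg, Units.val_one, zpow_neg, zpow_neg, zpow_one, zpow_natCast, ← hk, mul_inv,
      mul_assoc, inv_mul_cancel₀ hθ, mul_one]

theorem exists_kummerHom (hn : 2 < n) (hζ : IsPrimitiveRoot ζ n) (hθ : θ ≠ 0)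
    (h : ∀ σ : G, (σ • ζ = ζ ∧ ∃ k : ℕ, σ • θ = ζ ^ k * θ) ∨
      (σ • ζ = ζ⁻¹ ∧ ∃ k : ℕ, σ • θ * θ = ζ ^ k)) :
    ∃ π : G →* Multiplicative (ZMod n), ∀ (σ : G) (k : ℕ), σ • ζ = ζ →
      σ • θ = ζ ^ k * θ → π σ = Multiplicative.ofAdd (k : ZMod n) := by
  choose s k hk using fun σ => exists_isKummerExponent hθ (h σ)
  refine ⟨MonoidHom.mk' (fun σ => Multiplicative.ofAdd (k σ : ZMod n)) fun σ τ => ?_,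
    fun σ j hσζ hσθ => congrArg Multiplicative.ofAdd ?_⟩
  · rw [← ofAdd_add, ← Int.cast_add]
    exact congrArg _ ((hk _).intCast_eq hn hζ hθ ((hk σ).mul (hζ.ne_zero (by lia)) (hk τ)))
  · have hj : IsKummerExponent ζ θ σ 1 j := ⟨by simpa using hσζ, by simpa using hσθ⟩
    simpa using (hk σ).intCast_eq hn hζ hθ hj

end KummerHom

section InertiaKummer

variable {G R : Type*} [Group G] [CommRing R] [IsDomain R] [MulSemiringAction G R] {p : ℕ}
  [hp : Fact p.Prime] {ζ θ : R}

theorem dvd_of_mem_inertia_of_smul_eq_pow_mul (hζ : IsPrimitiveRoot ζ p) (hθ : IsUnit θ)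
    (hdvd : ζ - 1 ∣ θ - θ ^ p) {Q : Ideal R} (hQ : Q ≠ ⊤) {σ : G} (hσ : σ ∈ Q.inertia G)
    (hσζ : σ • ζ = ζ) {k : ℕ} (hk : σ • θ = ζ ^ k * θ) : p ∣ k := by
  by_contra hpk
  have hcop : k.Coprime p := ((hp.out.coprime_iff_not_dvd).2 hpk).symm
  obtain ⟨u, hu⟩ := hζ.associated_sub_one_pow_sub_one_of_coprime hcop
  obtain ⟨y, hy⟩ := hdvd
  have hpow : (ζ ^ k) ^ p = 1 := by rw [← pow_mul, mul_comm, pow_mul, hζ.pow_eq_one, one_pow]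
  have hσy : (ζ - 1) * (σ • y) = ζ ^ k * θ - θ ^ p := by
    have := congrArg (σ • ·) hy
    simp only [smul_sub, smul_mul', smul_pow', smul_one, hσζ, hk] at this
    rw [← this, mul_pow, hpow, one_mul]
  have hdiff : σ • y - y = u * θ := by
    refine mul_left_cancel₀ (sub_ne_zero.2 (hζ.ne_one hp.out.one_lt)) ?_
    rw [mul_sub, hσy, ← hy, ← mul_assoc, hu]
    ring
  have hmem : σ • y - y ∈ Q := hσ y
  rw [hdiff] at hmem
  exact hQ (Ideal.eq_top_of_isUnit_mem _ hmem (u.isUnit.mul hθ))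

/-- `π` extends the Kummer character of `θ`: every `σ` fixing `ζ` multiplies `θ` by `ζ ^ k` for some
`k` with `π σ = k`. Nothing is required of `π` outside the stabilizer of `ζ`. -/
def IsKummerCharacter {n : ℕ} (ζ θ : R) (π : G →* Multiplicative (ZMod n)) : Prop :=
  ∀ σ : G, σ • ζ = ζ → ∃ k : ℕ, σ • θ = ζ ^ k * θ ∧ π σ = Multiplicative.ofAdd (k : ZMod n)

theorem inertia_le_ker_of_sub_one_dvd (hp2 : p ≠ 2) (hζ : IsPrimitiveRoot ζ p) (hθ : IsUnit θ)
    (hdvd : ζ - 1 ∣ θ - θ ^ p) {π : G →* Multiplicative (ZMod p)}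
    (hπ : IsKummerCharacter ζ θ π) (hsq : ∀ σ : G, (σ ^ 2) • ζ = ζ)
    {Q : Ideal R} (hQ : Q ≠ ⊤) : Q.inertia G ≤ π.ker := by
  intro σ hσ
  obtain ⟨k, hk, hπk⟩ := hπ (σ ^ 2) (hsq σ)
  have hpk := dvd_of_mem_inertia_of_smul_eq_pow_mul hζ hθ hdvd hQ (pow_mem hσ 2) (hsq σ) hk
  rw [(ZMod.natCast_eq_zero_iff k p).2 hpk, ofAdd_zero, map_pow] at hπk
  have hπp : π σ ^ p = 1 := by
    simpa using pow_card_eq_one' (G := Multiplicative (ZMod p)) (x := π σ)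
  have hcop : Nat.Coprime 2 p := (Nat.coprime_primes Nat.prime_two hp.out).2 hp2.symm
  exact orderOf_eq_one_iff.1
    (Nat.eq_one_of_dvd_coprimes hcop (orderOf_dvd_of_pow_eq_one hπk)
      (orderOf_dvd_of_pow_eq_one hπp))

end InertiaKummer

section IntegrallyClosed

variable {R : Type*} [CommRing R] [IsDomain R] [IsIntegrallyClosed R]

theorem dvd_of_pow_add_mul_pow_eq_zero {n : ℕ} (hn : 2 ≤ n) {l x b c : R} (hl : l ≠ 0)
    (h : x ^ n + b * l ^ (n - 1) * x + c * l ^ n = 0) : l ∣ x := by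
  have hlK : algebraMap R (FractionRing R) l ≠ 0 := by simpa using hl
  set Y := algebraMap R (FractionRing R) x / algebraMap R (FractionRing R) l
  have hxY : algebraMap R (FractionRing R) x = algebraMap R (FractionRing R) l * Y :=
    (mul_div_cancel₀ _ hlK).symm
  have hint : IsIntegral R Y := by
    refine ⟨Polynomial.X ^ n + (Polynomial.C b * Polynomial.X + Polynomial.C c),
      Polynomial.monic_X_pow_add (Polynomial.degree_linear_le.trans_lt (by exact_mod_cast hn)), ?_⟩
    have hK := congrArg (algebraMap R (FractionRing R)) h
    simp only [map_add, map_mul, map_pow, map_zero, hxY] at hK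
    simp only [Polynomial.eval₂_add, Polynomial.eval₂_mul, Polynomial.eval₂_pow,
      Polynomial.eval₂_X, Polynomial.eval₂_C]
    refine (mul_eq_zero_iff_left (pow_ne_zero n hlK)).1 ?_
    obtain ⟨m, rfl⟩ := Nat.exists_eq_add_of_le' (show 1 ≤ n by lia)
    rw [Nat.add_sub_cancel] at hK
    linear_combination hK
  obtain ⟨y, hy⟩ := IsIntegrallyClosed.isIntegral_iff.1 hint
  exact ⟨y, FaithfulSMul.algebraMap_injective R (FractionRing R) (by rw [hxY, map_mul, hy])⟩

-- Expanding `((θ - η) + η) ^ p` for `η = θ ^ p` gives an equation for `(θ - η) / (ζ - 1)` whose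
-- coefficients are integral because `(ζ - 1) ^ (p - 1)` divides `p`.
theorem sub_one_dvd_sub_pow_of_pow_dvd {p : ℕ} [hp : Fact p.Prime] {ζ θ : R}
    (hζ : IsPrimitiveRoot ζ p) (h : (ζ - 1) ^ p ∣ (θ ^ p) ^ p - θ ^ p) : ζ - 1 ∣ θ - θ ^ p := by
  obtain ⟨c, hc⟩ := h
  obtain ⟨z, -, hz⟩ := hζ.self_sub_one_pow_dvd_order (k := p - 1) (by have := hp.out.pos; lia)
  obtain ⟨r, hr⟩ := exists_add_pow_prime_eq hp.out (θ - θ ^ p) (θ ^ p)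
  rw [sub_add_cancel, hz] at hr
  refine dvd_of_pow_add_mul_pow_eq_zero hp.out.two_le (b := z * θ ^ p * r) (c := c)
    (sub_ne_zero.2 (hζ.ne_one hp.out.one_lt)) ?_
  linear_combination -hr - hc

end IntegrallyClosed

/-! ### Fifth roots of unity and radicals of quadratic units -/

section FifthRoot

variable {R : Type*} [CommRing R] {ζ η : R}

theorem primitiveRoot_sub_pow_four_ne_zero (hζ : IsPrimitiveRoot ζ 5) : ζ - ζ ^ 4 ≠ 0 := fun h =>
  absurd (hζ.pow_inj (i := 1) (j := 4) (by norm_num) (by norm_num) (by linear_combination h))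
    (by norm_num)

variable [IsDomain R]

theorem one_add_primitiveRoot_pow_five_eq_zero (hζ : IsPrimitiveRoot ζ 5) :
    1 + ζ + ζ ^ 2 + ζ ^ 3 + ζ ^ 4 = 0 := by
  simpa [Finset.sum_range_succ] using hζ.geom_sum_eq_zero (by norm_num)

theorem primitiveRoot_sub_one_pow_four_mul (hζ : IsPrimitiveRoot ζ 5) :
    (ζ - 1) ^ 4 * (ζ ^ 3 - ζ - 1) = 5 := by
  linear_combination
    (ζ ^ 3 - 5 * ζ ^ 2 + 9 * ζ - 6) * one_add_primitiveRoot_pow_five_eq_zero hζ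

theorem one_add_two_mul_primitiveRoot_sq (hζ : IsPrimitiveRoot ζ 5) :
    (1 + 2 * (ζ + ζ ^ 4)) ^ 2 = 5 := by
  linear_combination
    (4 * ζ ^ 4 - 4 * ζ ^ 3 + 8 * ζ - 4) * one_add_primitiveRoot_pow_five_eq_zero hζ

theorem sub_one_pow_five_dvd_of_dvd_trace (hζ : IsPrimitiveRoot ζ 5) {T : ℤ} (hT : 25 ∣ T)
    (hη : η ^ 2 - T * η + 1 = 0) : (ζ - 1) ^ 5 ∣ η ^ 5 - η := by
  obtain ⟨k, rfl⟩ := hT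
  refine ⟨(ζ - 1) ^ 3 * (ζ ^ 3 - ζ - 1) ^ 2 * (η ^ 2 - 1) * k * η ^ 2, ?_⟩
  push_cast at hη
  linear_combination η * (η ^ 2 - 1) * hη - k * η ^ 2 * (η ^ 2 - 1) *
    ((ζ - 1) ^ 4 * (ζ ^ 3 - ζ - 1) + 5) * primitiveRoot_sub_one_pow_four_mul hζ

-- Here `(η - s) ^ 2 = 125kη`, and `125` is divisible by `(ζ - 1) ^ 12`.
theorem sub_one_pow_five_dvd_of_trace_eq [IsIntegrallyClosed R] (hζ : IsPrimitiveRoot ζ 5)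
    {T s k : ℤ} (hs : s ^ 2 = 1) (hT : T = 2 * s + 125 * k) (hη : η ^ 2 - T * η + 1 = 0) :
    (ζ - 1) ^ 5 ∣ η ^ 5 - η := by
  have hs' : (s : R) ^ 2 = 1 := by exact_mod_cast congrArg (Int.cast : ℤ → R) hs
  have hsq : ((ζ - 1) ^ 6) ^ 2 ∣ (η - s) ^ 2 := by
    refine ⟨(ζ ^ 3 - ζ - 1) ^ 3 * k * η, ?_⟩
    subst hT
    push_cast at hη
    calc (η - s) ^ 2 = 5 ^ 3 * k * η := by linear_combination hη + hs'
      _ = ((ζ - 1) ^ 4 * (ζ ^ 3 - ζ - 1)) ^ 3 * k * η := by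
        rw [primitiveRoot_sub_one_pow_four_mul hζ]
      _ = ((ζ - 1) ^ 6) ^ 2 * ((ζ ^ 3 - ζ - 1) ^ 3 * k * η) := by ring
  have hroot : η - s ∣ η ^ 5 - η :=
    ⟨η * (η + s) * (η ^ 2 + 1), by linear_combination η * (η ^ 2 + 1) * hs'⟩
  exact (pow_dvd_pow _ (by norm_num)).trans
    (((IsIntegrallyClosed.pow_dvd_pow_iff two_ne_zero).1 hsq).trans hroot)

theorem eq_or_eq_pow_four_of_add_pow_four_eq {z : R} (hζ : ζ ^ 5 = 1) (hz : z ^ 5 = 1)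
    (h : z + z ^ 4 = ζ + ζ ^ 4) : z = ζ ∨ z = ζ ^ 4 := by
  have hfactor : (z - ζ) * (z - ζ ^ 4) = 0 := by linear_combination z * h - hz + hζ
  simpa [sub_eq_zero] using hfactor

-- The square of the fixed element determines `f ζ + (f ζ) ^ 4`, hence `f ζ` up to inversion.
theorem map_eq_or_of_map_sub_mul_eq (hζ : IsPrimitiveRoot ζ 5) {r : R} (hr : r ≠ 0) {f : R →+* R}
    (hf : Function.Injective f) (hr2 : f (r ^ 2) = r ^ 2)
    (h : f ((ζ - ζ ^ 4) * r) = (ζ - ζ ^ 4) * r) :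
    (f ζ = ζ ∧ f r = r) ∨ (f ζ = ζ ^ 4 ∧ f r = -r) := by
  have hfζ := hζ.map_of_injective hf
  have hA := primitiveRoot_sub_pow_four_ne_zero hζ
  have hζ5 := hζ.pow_eq_one
  have hfζ5 := hfζ.pow_eq_one
  rw [map_pow] at hr2
  rw [map_mul, map_sub, map_pow] at h
  have hsq : (f ζ - f ζ ^ 4) ^ 2 = (ζ - ζ ^ 4) ^ 2 := by
    refine mul_right_cancel₀ (pow_ne_zero 2 hr) ?_
    rw [← mul_pow (ζ - ζ ^ 4), ← h, mul_pow, hr2]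
  have htrace : f ζ + f ζ ^ 4 = ζ + ζ ^ 4 := by
    linear_combination -hsq + one_add_primitiveRoot_pow_five_eq_zero hfζ -
      one_add_primitiveRoot_pow_five_eq_zero hζ + (f ζ ^ 3 - 2) * hfζ5 - (ζ ^ 3 - 2) * hζ5
  rcases eq_or_eq_pow_four_of_add_pow_four_eq hζ5 hfζ5 htrace with hfζ' | hfζ'
  · rw [hfζ'] at h ⊢
    exact Or.inl ⟨rfl, mul_left_cancel₀ hA h⟩
  · rw [hfζ'] at h ⊢
    refine Or.inr ⟨rfl, mul_left_cancel₀ hA ?_⟩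
    linear_combination -h - f r * ζ * (ζ ^ 10 + ζ ^ 5 + 1) * hζ5

end FifthRoot

/-- `θ` is an `n`-th root of the unit `(T + ρ) / 2` of trace `T` and norm `1`, where `ρ` is a square
root of `T² - 4`. -/
structure IsUnitRadical {R : Type*} [CommRing R] (n : ℕ) (ρ : R) (T : ℤ) (θ : R) : Prop where
  two_mul_pow : 2 * θ ^ n = T + ρ
  sq_eq : ρ ^ 2 = T ^ 2 - 4

namespace IsUnitRadical

variable {R : Type*} [CommRing R] [IsDomain R] [CharZero R] {n : ℕ} {ρ θ ζ : R} {T : ℤ}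

theorem pow_mul_sub_eq_one (h : IsUnitRadical n ρ T θ) : θ ^ n * (T - θ ^ n) = 1 := by
  refine mul_left_cancel₀ (by norm_num : (4 : R) ≠ 0) ?_
  linear_combination (2 * T - 2 * θ ^ n - (T + ρ)) * h.two_mul_pow - h.sq_eq

theorem pow_sq_sub_add_one_eq_zero (h : IsUnitRadical n ρ T θ) :
    (θ ^ n) ^ 2 - T * θ ^ n + 1 = 0 := by
  linear_combination -h.pow_mul_sub_eq_one

theorem isUnit (h : IsUnitRadical n ρ T θ) (hn : n ≠ 0) : IsUnit θ :=
  (isUnit_pow_iff hn).1 (IsUnit.of_mul_eq_one _ h.pow_mul_sub_eq_one)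

variable {f : R →+* R}

theorem exists_map_eq_pow_mul [NeZero n] (h : IsUnitRadical n ρ T θ) (hζ : IsPrimitiveRoot ζ n)
    (hρ : f ρ = ρ) : ∃ k : ℕ, f θ = ζ ^ k * θ := by
  have hpow : f θ ^ n = θ ^ n := by
    have hf := congrArg f h.two_mul_pow
    simp only [map_mul, map_add, map_pow, map_ofNat, map_intCast, hρ] at hf
    exact mul_left_cancel₀ two_ne_zero (hf.trans h.two_mul_pow.symm)
  obtain ⟨u, rfl⟩ := h.isUnit (NeZero.ne n)
  obtain ⟨k, -, hk⟩ := hζ.eq_pow_of_pow_eq_one (ξ := f u * ↑u⁻¹)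
    (by rw [mul_pow, hpow, ← mul_pow, Units.mul_inv, one_pow])
  exact ⟨k, by rw [hk, Units.inv_mul_cancel_right]⟩

theorem exists_map_mul_eq_pow [NeZero n] (h : IsUnitRadical n ρ T θ) (hζ : IsPrimitiveRoot ζ n)
    (hρ : f ρ = -ρ) : ∃ k : ℕ, f θ * θ = ζ ^ k := by
  have hpow : (f θ * θ) ^ n = 1 := by
    have hf := congrArg f h.two_mul_pow
    simp only [map_mul, map_add, map_pow, map_ofNat, map_intCast, hρ] at hf
    refine mul_left_cancel₀ (by norm_num : (4 : R) ≠ 0) ?_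
    linear_combination (2 * θ ^ n) * hf + (T - ρ) * h.two_mul_pow - h.sq_eq
  obtain ⟨k, -, hk⟩ := hζ.eq_pow_of_pow_eq_one hpow
  exact ⟨k, hk.symm⟩

end IsUnitRadical

/-! ### Frobenius elements -/

theorem primitiveRoot_map_of_natCast_ne_zero {R F : Type*} [CommRing R] [IsDomain R] [CommRing F]
    [IsDomain F] {n : ℕ} {ζ : R} (hζ : IsPrimitiveRoot ζ n) (hn : (n : F) ≠ 0) (ψ : R →+* F) :
    IsPrimitiveRoot (ψ ζ) n := by
  have : NeZero (n : F) := ⟨hn⟩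
  have hpos : 0 < n := Nat.pos_of_ne_zero fun h => hn (by rw [h, Nat.cast_zero])
  rw [← Polynomial.isRoot_cyclotomic_iff, ← Polynomial.map_cyclotomic n ψ]
  exact (hζ.isRoot_cyclotomic hpos).map

theorem primitiveRoot_pow_eq_pow_iff {R : Type*} [CommMonoid R] {ζ : R} {n a b : ℕ} [NeZero n]
    (hζ : IsPrimitiveRoot ζ n) : ζ ^ a = ζ ^ b ↔ a ≡ b [MOD n] := by
  rw [(hζ.isOfFinOrder (NeZero.ne n)).pow_eq_pow_iff_modEq, ← hζ.eq_orderOf]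

section ResidueField

variable {G R F : Type*} [Group G] [CommRing R] [IsDomain R] [MulSemiringAction G R] [Field F]
  {q : ℕ} [hq : Fact q.Prime] {ψ : R →+* F} {φ : G}

theorem smul_primitiveRoot_eq_of_map_smul_eq_pow (hφ : ∀ x, ψ (φ • x) = ψ x ^ q) {ζ : R} {n : ℕ}
    [NeZero n] (hζ : IsPrimitiveRoot ζ n) (hψζ : IsPrimitiveRoot (ψ ζ) n) (hqn : n ∣ q - 1) :
    φ • ζ = ζ := by
  have hpow : (φ • ζ) ^ n = 1 := by rw [← smul_pow', hζ.pow_eq_one, smul_one]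
  obtain ⟨i, -, hi⟩ := hζ.eq_pow_of_pow_eq_one hpow
  have hqmod : q ≡ 1 [MOD n] := ((Nat.modEq_iff_dvd' hq.out.one_le).2 hqn).symm
  have hiq : ψ ζ ^ i = ψ ζ ^ q := by rw [← map_pow, hi, hφ]
  rw [← hi]
  simpa using (primitiveRoot_pow_eq_pow_iff hζ).2
    (((primitiveRoot_pow_eq_pow_iff hψζ).1 hiq).trans hqmod)

variable [Algebra (ZMod q) F] {t : ℤ} {e : ZMod q}

theorem eq_algebraMap_or_of_trace_eq {X : F} (he : e ^ 2 - t * e + 1 = 0)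
    (hX : X ^ 2 - t * X + 1 = 0) :
    X = algebraMap (ZMod q) F e ∨ X = algebraMap (ZMod q) F (t - e) := by
  have h := congrArg (algebraMap (ZMod q) F) he
  simp only [map_add, map_sub, map_mul, map_pow, map_one, map_zero, map_intCast] at h
  have : (X - algebraMap (ZMod q) F e) * (X - algebraMap (ZMod q) F (t - e)) = 0 := by
    rw [map_sub, map_intCast]
    linear_combination hX - h
  simpa [sub_eq_zero] using this

theorem natCast_sq_eq_of_hasResidueExponent {X z : F} {c : ZMod q} {n i k : ℕ}
    (hz : IsPrimitiveRoot z 5) (hq5 : 5 ∣ q - 1) (hX : (X ^ 5) ^ 2 - t * X ^ 5 + 1 = 0)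
    (hc : HasResidueExponent c t n) (hi : z ^ i = algebraMap (ZMod q) F c)
    (hk : z ^ k * X = X ^ q) : (k : ZMod 5) ^ 2 = (i * n) ^ 2 := by
  obtain ⟨e, he, -, hen⟩ := hc
  have hX0 : X ≠ 0 := by
    rintro rfl
    simp at hX
  have hzk : z ^ k = (X ^ 5) ^ ((q - 1) / 5) := by
    refine mul_right_cancel₀ hX0 ?_
    rw [hk, ← pow_mul, Nat.mul_div_cancel' hq5, ← pow_succ, Nat.sub_add_cancel hq.out.one_le]
  have hzin : z ^ (i * n) = algebraMap (ZMod q) F (e ^ ((q - 1) / 5)) := by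
    rw [pow_mul, hi, hen, map_pow]
  have hexp : ∀ a b : ℕ, z ^ a = z ^ b → (a : ZMod 5) = b := fun a b hab =>
    (ZMod.natCast_eq_natCast_iff a b 5).2 ((primitiveRoot_pow_eq_pow_iff hz).1 hab)
  rcases eq_algebraMap_or_of_trace_eq he hX with hXe | hXe
  · rw [hexp k (i * n) (by rw [hzk, hXe, hzin, map_pow]), Nat.cast_mul]
  · have hinv : (t - e) * e = 1 := by linear_combination -he
    have hsum := hexp (k + i * n) 0 (by
      rw [pow_add, hzk, hXe, hzin, ← map_pow, ← map_mul, ← mul_pow, hinv, one_pow, map_one,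
        pow_zero])
    push_cast at hsum
    linear_combination (k - i * n : ZMod 5) * hsum

theorem smul_eq_of_map_eq_algebraMap (hφ : ∀ x, ψ (φ • x) = ψ x ^ q) {r : R}
    (hr : (φ • r) ^ 2 = r ^ 2) {a : ZMod q} (hψr : ψ r = algebraMap (ZMod q) F a) (ha : 2 * a ≠ 0) :
    φ • r = r := by
  refine (sq_eq_sq_iff_eq_or_eq_neg.1 hr).resolve_right fun hneg => ha ?_
  have h := hφ r
  rw [hneg, map_neg, hψr, ← map_pow, ZMod.pow_card, ← map_neg] at h
  linear_combination -(algebraMap (ZMod q) F).injective h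

theorem smul_eq_of_hasResidueExponent [CharZero R] (hφ : ∀ x, ψ (φ • x) = ψ x ^ q) (hq2 : q ≠ 2)
    {ρ θ : R} {m n : ℕ} (h : IsUnitRadical m ρ t θ) {c : ZMod q} (hc : HasResidueExponent c t n) :
    φ • ρ = ρ := by
  obtain ⟨e, he, he2, -⟩ := hc
  obtain ⟨g, hg, hgt⟩ : ∃ g : ZMod q, ψ θ ^ m = algebraMap (ZMod q) F g ∧ 2 * g ≠ t := by
    have hX : (ψ θ ^ m) ^ 2 - t * ψ θ ^ m + 1 = 0 := by
      simpa using congrArg ψ h.pow_sq_sub_add_one_eq_zero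
    rcases eq_algebraMap_or_of_trace_eq he hX with hX | hX
    · exact ⟨e, hX, he2⟩
    · exact ⟨_, hX, fun h2 => he2 (by linear_combination -h2)⟩
  have hψρ : ψ ρ = algebraMap (ZMod q) F (2 * g - t) := by
    have hθ := congrArg ψ h.two_mul_pow
    simp only [map_mul, map_add, map_pow, map_ofNat, map_intCast, hg] at hθ
    simp only [map_mul, map_sub, map_ofNat, map_intCast]
    linear_combination -hθ
  have hsq : (φ • ρ) ^ 2 = ρ ^ 2 := by
    rw [← smul_pow', h.sq_eq, ← Int.cast_pow, ← Int.cast_ofNat, ← Int.cast_sub]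
    exact map_intCast (MulSemiringAction.toRingHom G R φ) _
  have h2 : (2 : ZMod q) ≠ 0 := Ring.two_ne_zero (by rwa [ZMod.ringChar_zmod_n])
  exact smul_eq_of_map_eq_algebraMap hφ hsq hψρ (mul_ne_zero h2 (sub_ne_zero.2 hgt))

end ResidueField

universe u

theorem exists_map_smul_eq_pow (N : Type u) [Field N] [NumberField N] [IsGalois ℚ N] (q : ℕ)
    [hq : Fact q.Prime] : ∃ (F : Type u) (_ : Field F) (_ : Algebra (ZMod q) F) (ψ : 𝓞 N →+* F)
      (φ : Gal(N/ℚ)), ∀ x, ψ (φ • x) = ψ x ^ q := by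
  have : (Ideal.span {(q : ℤ)}).IsMaximal :=
    PrincipalIdealRing.isMaximal_of_irreducible (Nat.prime_iff_prime_int.1 hq.out).irreducible
  obtain ⟨Q, hQ, hQq⟩ := Ideal.exists_maximal_ideal_liesOver_of_isIntegral (S := 𝓞 N)
    (Ideal.span {(q : ℤ)})
  have hq0 : Ideal.span {(q : ℤ)} ≠ ⊥ := by simpa using hq.out.ne_zero
  have hQ0 : Q ≠ ⊥ := Ideal.ne_bot_of_liesOver_of_ne_bot hq0 Q
  have : Finite (𝓞 N ⧸ Q) := Ideal.finiteQuotientOfFreeOfNeBot _ hQ0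
  obtain ⟨φ, hφ⟩ := IsArithFrobAt.exists_of_isInvariant ℤ Gal(N/ℚ) Q
  have hcard : Nat.card (ℤ ⧸ Q.under ℤ) = q := by
    rw [← hQq.over, Nat.card_congr (Int.quotientSpanNatEquivZMod q).toEquiv, Nat.card_zmod]
  let : Field (𝓞 N ⧸ Q) := Ideal.Quotient.field Q
  have hqQ : (q : 𝓞 N) ∈ Q := by
    have : (q : ℤ) ∈ Q.under ℤ := hQq.over ▸ Ideal.mem_span_singleton_self _
    simpa [Ideal.under] using this
  have : CharP (𝓞 N ⧸ Q) q := (CharP.charP_iff_prime_eq_zero hq.out).2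
    (by simpa using Ideal.Quotient.eq_zero_iff_mem.2 hqQ)
  refine ⟨𝓞 N ⧸ Q, inferInstance, ZMod.algebra _ q, Ideal.Quotient.mk Q, φ, fun x => ?_⟩
  rw [← hcard]
  exact AlgHom.IsArithFrobAt.mk_apply hφ x

theorem exists_frobenius_of_hasKummerWitness {N : Type*} [Field N] [NumberField N] [IsGalois ℚ N]
    {ζ ρ ρ' θ θ' : 𝓞 N} {t t' : ℤ} {n n' : ℕ} (hζ : IsPrimitiveRoot ζ 5)
    (h : IsUnitRadical 5 ρ t θ) (h' : IsUnitRadical 5 ρ' t' θ') (hW : HasKummerWitness t t' n n') :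
    ∃ φ : Gal(N/ℚ), φ • ζ = ζ ∧ φ • ρ = ρ ∧ ∃ i : ZMod 5, i ≠ 0 ∧
      (∀ k : ℕ, φ • θ = ζ ^ k * θ → (k : ZMod 5) ^ 2 = (i * n) ^ 2) ∧
      ∀ k : ℕ, φ • θ' = ζ ^ k * θ' → (k : ZMod 5) ^ 2 = (i * n') ^ 2 := by
  obtain ⟨q, hq, hq5, c, hc5, hc1, hn, hn'⟩ := hW
  have : Fact q.Prime := ⟨hq⟩
  obtain ⟨F, _, _, ψ, φ, hφ⟩ := exists_map_smul_eq_pow N q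
  have : CharP F q := charP_of_injective_algebraMap (algebraMap (ZMod q) F).injective q
  have hq_gt : 5 < q := by
    have := hq.two_le
    lia
  have h5F : ((5 : ℕ) : F) ≠ 0 := fun h0 =>
    absurd (Nat.le_of_dvd (by norm_num) ((CharP.cast_eq_zero_iff F q 5).1 h0)) (by lia)
  have hz := primitiveRoot_map_of_natCast_ne_zero hζ h5F ψ
  obtain ⟨i, -, hi⟩ := hz.eq_pow_of_pow_eq_one
    (show algebraMap (ZMod q) F c ^ 5 = 1 by rw [← map_pow, hc5, map_one])
  have hk : ∀ {x : 𝓞 N} {k : ℕ}, φ • x = ζ ^ k * x → ψ ζ ^ k * ψ x = ψ x ^ q := fun hx => by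
    rw [← hφ, hx, map_mul, map_pow]
  refine ⟨φ, smul_primitiveRoot_eq_of_map_smul_eq_pow hφ hζ hz hq5,
    smul_eq_of_hasResidueExponent hφ (by lia) h hn, i, fun h0 => hc1 ?_,
    fun k hkθ => natCast_sq_eq_of_hasResidueExponent hz hq5
      (by simpa using congrArg ψ h.pow_sq_sub_add_one_eq_zero) hn hi (hk hkθ),
    fun k hkθ => natCast_sq_eq_of_hasResidueExponent hz hq5
      (by simpa using congrArg ψ h'.pow_sq_sub_add_one_eq_zero) hn' hi (hk hkθ)⟩
  obtain ⟨m, rfl⟩ := (ZMod.natCast_eq_zero_iff i 5).1 h0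
  rw [pow_mul, hz.pow_eq_one, one_pow] at hi
  exact (algebraMap (ZMod q) F).injective (by rw [← hi, map_one])

/-! ### The field `ℚ((ζ₅ - ζ₅⁻¹)√(t² - 4))` -/

theorem prod_surjective_of_det_ne_zero {G : Type*} [Group G] {p : ℕ} [Fact p.Prime]
    (π₁ π₂ : G →* Multiplicative (ZMod p)) {a b : G}
    (h : (π₁ a).toAdd * (π₂ b).toAdd - (π₁ b).toAdd * (π₂ a).toAdd ≠ 0) :
    Function.Surjective (π₁.prod π₂) := by
  rintro ⟨z, w⟩
  obtain ⟨m, hm⟩ : ∃ m, m * _ = z.toAdd * (π₂ b).toAdd - w.toAdd * (π₁ b).toAdd :=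
    ⟨_, div_mul_cancel₀ _ h⟩
  obtain ⟨n, hn⟩ : ∃ n, n * _ = (π₁ a).toAdd * w.toAdd - (π₂ a).toAdd * z.toAdd :=
    ⟨_, div_mul_cancel₀ _ h⟩
  have hcomb : ∀ π : G →* Multiplicative (ZMod p), (π (a ^ m.val * b ^ n.val)).toAdd =
      m * (π a).toAdd + n * (π b).toAdd := fun π => by simp
  refine ⟨a ^ m.val * b ^ n.val, Prod.ext (Multiplicative.toAdd.injective ?_)
    (Multiplicative.toAdd.injective ?_)⟩ <;>
  refine mul_right_cancel₀ h ?_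
  · rw [MonoidHom.prod_apply, hcomb]
    linear_combination (π₁ a).toAdd * hm + (π₁ b).toAdd * hn
  · rw [MonoidHom.prod_apply, hcomb]
    linear_combination (π₂ a).toAdd * hm + (π₂ b).toAdd * hn

theorem sq_smul_eq_of_smul_eq_or {G R : Type*} [Monoid G] [CommRing R] [IsDomain R]
    [MulSemiringAction G R] {σ : G} {ζ : R} (h : σ • ζ = ζ ∨ σ • ζ * ζ = 1) : (σ ^ 2) • ζ = ζ := by
  rw [pow_two, mul_smul]
  rcases h with h | h
  · rw [h, h]
  · have hσσ : σ • σ • ζ * σ • ζ = 1 := by rw [← smul_mul', h, smul_one]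
    exact mul_right_cancel₀ (right_ne_zero_of_mul_eq_one hσσ) (hσσ.trans (by rw [mul_comm, h]))

theorem exists_kummerHom_inertia_le_ker {K N : Type*} [Field K] [Field N] [NumberField N]
    [Algebra K N] {p : ℕ} [hp : Fact p.Prime] (hp2 : p ≠ 2) {ζ ρ θ : 𝓞 N} {T : ℤ}
    (hζ : IsPrimitiveRoot ζ p) (h : IsUnitRadical p ρ T θ)
    (hσ : ∀ σ : Gal(N/K), (σ • ζ = ζ ∧ σ • ρ = ρ) ∨ (σ • ζ * ζ = 1 ∧ σ • ρ = -ρ))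
    (hdvd : (ζ - 1) ^ p ∣ (θ ^ p) ^ p - θ ^ p) :
    ∃ π : Gal(N/K) →* Multiplicative (ZMod p), IsKummerCharacter ζ θ π ∧
      ∀ Q : Ideal (𝓞 N), Q ≠ ⊤ → Q.inertia Gal(N/K) ≤ π.ker := by
  have hp_gt : 2 < p := lt_of_le_of_ne hp.out.two_le (Ne.symm hp2)
  have hθ : IsUnit θ := h.isUnit hp.out.ne_zero
  have hζζ : ζ * ζ ≠ 1 := by
    rw [← pow_two]
    exact hζ.pow_ne_one_of_pos_of_lt two_ne_zero hp_gt
  have hex : ∀ σ : Gal(N/K), σ • ζ = ζ → ∃ k : ℕ, σ • θ = ζ ^ k * θ := fun σ hσζ =>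
    h.exists_map_eq_pow_mul (f := MulSemiringAction.toRingHom Gal(N/K) (𝓞 N) σ) hζ
      ((hσ σ).resolve_right fun hinv => hζζ (by simpa only [hσζ] using hinv.1)).2
  have hinj : Function.Injective (algebraMap (𝓞 N) N) := FaithfulSMul.algebraMap_injective _ _
  have hcoe : ∀ {x y : 𝓞 N}, x = y → algebraMap (𝓞 N) N x = algebraMap (𝓞 N) N y := congrArg _
  obtain ⟨π, hπ⟩ := exists_kummerHom (G := Gal(N/K)) hp_gt (hζ.map_of_injective hinj)
    (θ := algebraMap (𝓞 N) N θ) (by simpa using hθ.ne_zero) fun σ => by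
      simp only [← algebraMap.coe_smul', ← map_mul, ← map_pow]
      rcases hσ σ with ⟨hσζ, -⟩ | ⟨hσζ, hσρ⟩
      · obtain ⟨k, hk⟩ := hex σ hσζ
        exact Or.inl ⟨hcoe hσζ, k, hcoe hk⟩
      · obtain ⟨k, hk⟩ := h.exists_map_mul_eq_pow
          (f := MulSemiringAction.toRingHom Gal(N/K) (𝓞 N) σ) hζ hσρ
        refine Or.inr ⟨eq_inv_of_mul_eq_one_left ?_, k, hcoe hk⟩
        rw [← map_mul, hσζ, map_one]
  have hval : IsKummerCharacter ζ θ π := fun σ hσζ => by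
    obtain ⟨k, hk⟩ := hex σ hσζ
    refine ⟨k, hk, hπ σ k (hcoe hσζ) ?_⟩
    rw [← map_pow, ← map_mul, ← hk]
    rfl
  have hsq : ∀ σ : Gal(N/K), (σ ^ 2) • ζ = ζ := fun σ =>
    sq_smul_eq_of_smul_eq_or ((hσ σ).imp And.left And.left)
  exact ⟨π, hval, fun Q hQ => inertia_le_ker_of_sub_one_dvd hp2 hζ hθ
    (sub_one_dvd_sub_pow_of_pow_dvd hζ hdvd) hval hsq hQ⟩

theorem exists_eq_add_mul_of_dvd_sq_sub_four {a : ℤ} (h : 125 ∣ a ^ 2 - 4) :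
    ∃ s k : ℤ, s ^ 2 = 1 ∧ a = 2 * s + 125 * k := by
  have h5 : Prime (5 : ℤ) := Nat.prime_iff_prime_int.1 Nat.prime_five
  have hfactor : (5 : ℤ) ^ 3 ∣ (a - 2) * (a + 2) := by
    rwa [show (a - 2) * (a + 2) = a ^ 2 - 4 by ring]
  by_cases hdvd : 5 ∣ a - 2
  · obtain ⟨k, hk⟩ := h5.pow_dvd_of_dvd_mul_right 3 (by omega : ¬5 ∣ a + 2) hfactor
    exact ⟨1, k, by norm_num, by omega⟩
  · obtain ⟨k, hk⟩ := h5.pow_dvd_of_dvd_mul_left 3 hdvd hfactor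
    exact ⟨-1, k, by norm_num, by omega⟩

theorem not_isSquare_sq_sub_four {t : ℤ} (ht : 4 < t ^ 2) : ¬IsSquare (t ^ 2 - 4) := by
  rintro ⟨a, ha⟩
  rw [← sq_abs, ← abs_mul_abs_self a] at ha
  rw [← sq_abs] at ht
  have hlt : |a| < |t| := by nlinarith [abs_nonneg t]
  have hgt : 2 < |t| := by nlinarith [abs_nonneg t]
  nlinarith [abs_nonneg a]

/-- `ζ` is a primitive fifth root of unity, `r` is a square root of `t² - 4`, and `θ`, `θ'` are
fifth roots of the units `(t + r) / 2`, `(t' + 5√5 r) / 2` of norm `1`, where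
`√5 = 1 + 2 (ζ + ζ⁴)`. -/
structure IsPellKummerSystem {R : Type*} [CommRing R] (t t' : ℤ) (ζ r θ θ' : R) : Prop where
  primitive : IsPrimitiveRoot ζ 5
  radical : IsUnitRadical 5 r t θ
  radical' : IsUnitRadical 5 (5 * (1 + 2 * (ζ + ζ ^ 4)) * r) t' θ'

namespace IsPellKummerSystem

section Domain

variable {R : Type*} [CommRing R] [CharZero R] {t t' : ℤ} {ζ r θ θ' : R}

theorem ne_zero (h : IsPellKummerSystem t t' ζ r θ θ') (ht : 4 < t ^ 2) : r ≠ 0 := by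
  rintro rfl
  have hsq : (t : R) ^ 2 = 4 := by linear_combination -h.radical.sq_eq
  exact ht.ne' (by exact_mod_cast hsq)

variable [IsDomain R]

theorem sq_sub_four_eq (h : IsPellKummerSystem t t' ζ r θ θ') :
    t' ^ 2 - 4 = 125 * (t ^ 2 - 4) := by
  have h' : (t' : R) ^ 2 - 4 = 125 * (t ^ 2 - 4) := by
    rw [← h.radical'.sq_eq, ← h.radical.sq_eq, mul_pow, mul_pow,
      one_add_two_mul_primitiveRoot_sq h.primitive]
    ring
  exact_mod_cast h'

theorem map_eq_or (h : IsPellKummerSystem t t' ζ r θ θ') (ht : 4 < t ^ 2) {f : R →+* R}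
    (hf : Function.Injective f) (hfix : f ((ζ - ζ ^ 4) * r) = (ζ - ζ ^ 4) * r) :
    (f ζ = ζ ∧ f r = r ∧
      f (5 * (1 + 2 * (ζ + ζ ^ 4)) * r) = 5 * (1 + 2 * (ζ + ζ ^ 4)) * r) ∨
    (f ζ * ζ = 1 ∧ f r = -r ∧
      f (5 * (1 + 2 * (ζ + ζ ^ 4)) * r) = -(5 * (1 + 2 * (ζ + ζ ^ 4)) * r)) := by
  have hζ5 := h.primitive.pow_eq_one
  have hρ : f (5 * (1 + 2 * (ζ + ζ ^ 4)) * r) = 5 * (1 + 2 * (f ζ + f ζ ^ 4)) * f r := by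
    simp only [map_mul, map_add, map_pow, map_one, map_ofNat]
  rw [hρ]
  rcases map_eq_or_of_map_sub_mul_eq h.primitive (h.ne_zero ht) hf
    (by simp [h.radical.sq_eq, map_ofNat]) hfix with ⟨hζ, hr⟩ | ⟨hζ, hr⟩ <;> rw [hζ, hr]
  · exact Or.inl ⟨rfl, rfl, rfl⟩
  · refine Or.inr ⟨by rw [← pow_succ, hζ5], rfl, ?_⟩
    linear_combination -10 * r * ζ * (ζ ^ 10 + ζ ^ 5 + 1) * hζ5

theorem sub_one_pow_five_dvd (h : IsPellKummerSystem t t' ζ r θ θ') (h25 : 25 ∣ t) :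
    (ζ - 1) ^ 5 ∣ (θ ^ 5) ^ 5 - θ ^ 5 :=
  sub_one_pow_five_dvd_of_dvd_trace h.primitive h25 h.radical.pow_sq_sub_add_one_eq_zero

theorem sub_one_pow_five_dvd' [IsIntegrallyClosed R] (h : IsPellKummerSystem t t' ζ r θ θ') :
    (ζ - 1) ^ 5 ∣ (θ' ^ 5) ^ 5 - θ' ^ 5 := by
  obtain ⟨s, k, hs, hk⟩ := exists_eq_add_mul_of_dvd_sq_sub_four ⟨_, h.sq_sub_four_eq⟩
  exact sub_one_pow_five_dvd_of_trace_eq h.primitive hs hk h.radical'.pow_sq_sub_add_one_eq_zero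

end Domain

section NumberField

variable {K N : Type*} [Field K] [Field N] [NumberField N] [Algebra K N] {t t' : ℤ}
  {ζ r θ θ' : 𝓞 N}

theorem exists_kummerHoms (h : IsPellKummerSystem t t' ζ r θ θ') (ht : 4 < t ^ 2) (h25 : 25 ∣ t)
    (hfix : ∀ σ : Gal(N/K), σ • ((ζ - ζ ^ 4) * r) = (ζ - ζ ^ 4) * r) :
    ∃ π₁ π₂ : Gal(N/K) →* Multiplicative (ZMod 5),
      IsKummerCharacter ζ θ π₁ ∧ IsKummerCharacter ζ θ' π₂ ∧
      ∀ Q : Ideal (𝓞 N), Q ≠ ⊤ → Q.inertia Gal(N/K) ≤ (π₁.prod π₂).ker := by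
  have hσ : ∀ σ : Gal(N/K), _ := fun σ => h.map_eq_or ht
    (f := MulSemiringAction.toRingHom Gal(N/K) (𝓞 N) σ) (MulAction.injective σ) (hfix σ)
  have : Fact (Nat.Prime 5) := ⟨Nat.prime_five⟩
  obtain ⟨π₁, hπ₁, hI₁⟩ := exists_kummerHom_inertia_le_ker (K := K) (by norm_num) h.primitive
    h.radical (fun σ => (hσ σ).imp (fun hs => ⟨hs.1, hs.2.1⟩) fun hs => ⟨hs.1, hs.2.1⟩)
    (h.sub_one_pow_five_dvd h25)
  obtain ⟨π₂, hπ₂, hI₂⟩ := exists_kummerHom_inertia_le_ker (K := K) (by norm_num) h.primitive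
    h.radical' (fun σ => (hσ σ).imp (fun hs => ⟨hs.1, hs.2.2⟩) fun hs => ⟨hs.1, hs.2.2⟩)
    h.sub_one_pow_five_dvd'
  refine ⟨π₁, π₂, hπ₁, hπ₂, fun Q hQ => ?_⟩
  rw [MonoidHom.ker_prod]
  exact le_inf (hI₁ Q hQ) (hI₂ Q hQ)

theorem exists_surjective_prod [IsGalois ℚ N] (h : IsPellKummerSystem t t' ζ r θ θ')
    (hW : HasIndependentKummerWitnesses t t')
    (hlift : ∀ φ : Gal(N/ℚ), φ • ζ = ζ → φ • r = r → ∃ σ : Gal(N/K), ∀ x : 𝓞 N, σ • x = φ • x)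
    {π₁ π₂ : Gal(N/K) →* Multiplicative (ZMod 5)}
    (hπ₁ : IsKummerCharacter ζ θ π₁) (hπ₂ : IsKummerCharacter ζ θ' π₂) :
    Function.Surjective (π₁.prod π₂) := by
  have hfrob : ∀ {n n' : ℕ}, HasKummerWitness t t' n n' → ∃ (σ : Gal(N/K)) (i : ZMod 5), i ≠ 0 ∧
      (π₁ σ).toAdd ^ 2 = (i * n) ^ 2 ∧ (π₂ σ).toAdd ^ 2 = (i * n') ^ 2 := by
    intro n n' hnn'
    obtain ⟨φ, hφζ, hφr, i, hi, hk₁, hk₂⟩ :=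
      exists_frobenius_of_hasKummerWitness h.primitive h.radical h.radical' hnn'
    obtain ⟨σ, hσ⟩ := hlift φ hφζ hφr
    obtain ⟨k₁, hσθ, hπσ₁⟩ := hπ₁ σ ((hσ ζ).trans hφζ)
    obtain ⟨k₂, hσθ', hπσ₂⟩ := hπ₂ σ ((hσ ζ).trans hφζ)
    exact ⟨σ, i, hi, by rw [hπσ₁, toAdd_ofAdd, hk₁ k₁ ((hσ θ).symm.trans hσθ)],
      by rw [hπσ₂, toAdd_ofAdd, hk₂ k₂ ((hσ θ').symm.trans hσθ')]⟩
  obtain ⟨n₁, n₁', n₂, n₂', hW₁, hW₂, hdet⟩ := hW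
  obtain ⟨σ, i, hi, hσ₁, hσ₂⟩ := hfrob hW₁
  obtain ⟨τ, j, hj, hτ₁, hτ₂⟩ := hfrob hW₂
  have : Fact (Nat.Prime 5) := ⟨Nat.prime_five⟩
  refine prod_surjective_of_det_ne_zero π₁ π₂ (a := σ) (b := τ) fun h0 => hdet ?_
  refine mul_left_cancel₀ (pow_ne_zero 2 (mul_ne_zero hi hj)) ?_
  calc (i * j) ^ 2 * (n₁ * n₂' : ZMod 5) ^ 2 = (i * n₁) ^ 2 * (j * n₂') ^ 2 := by ring
    _ = ((π₁ σ).toAdd * (π₂ τ).toAdd) ^ 2 := by rw [← hσ₁, ← hτ₂, mul_pow]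
    _ = ((π₁ τ).toAdd * (π₂ σ).toAdd) ^ 2 := by rw [sub_eq_zero.1 h0]
    _ = (j * n₂) ^ 2 * (i * n₁') ^ 2 := by rw [mul_pow, hτ₁, hσ₂]
    _ = (i * j) ^ 2 * (n₂ * n₁') ^ 2 := by ring

end NumberField

end IsPellKummerSystem

section GaloisConjugates

variable {N : Type*} [Field N] [CharZero N] [FiniteDimensional ℚ N] [IsGalois ℚ N]

theorem exists_map_eq_neg_of_not_isSquare {n : ℤ} (hn : ¬IsSquare n) {y : N} (hy : y ^ 2 = n) :
    ∃ φ : Gal(N/ℚ), φ y = -y := by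
  by_contra! h
  have hfix : ∀ φ : Gal(N/ℚ), φ y = y := fun φ =>
    (sq_eq_sq_iff_eq_or_eq_neg.1 (by rw [← map_pow, hy, map_intCast])).resolve_right (h φ)
  obtain ⟨q, rfl⟩ := (IsGalois.mem_range_algebraMap_iff_fixed y).2 hfix
  have hq : q ^ 2 = n := (algebraMap ℚ N).injective (by rw [map_pow, hy, map_intCast])
  exact hn (Rat.isSquare_intCast_iff.1 ⟨q, by rw [← hq, pow_two]⟩)

theorem exists_map_eq_self_and_map_eq_neg {m n : ℤ} (hn : ¬IsSquare n) (hmn : ¬IsSquare (m * n))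
    {y w : N} (hy : y ^ 2 = m) (hw : w ^ 2 = n) : ∃ φ : Gal(N/ℚ), φ y = y ∧ φ w = -w := by
  have hsign : ∀ {l : ℤ} {x : N}, x ^ 2 = l → ∀ φ : Gal(N/ℚ), φ x = x ∨ φ x = -x := fun hx φ =>
    sq_eq_sq_iff_eq_or_eq_neg.1 (by rw [← map_pow, hx, map_intCast])
  have hy0 : y ≠ 0 := by
    rintro rfl
    exact hmn ⟨0, by simp [show m = 0 by exact_mod_cast hy.symm]⟩
  obtain ⟨τ, hτw⟩ := exists_map_eq_neg_of_not_isSquare hn hw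
  obtain ⟨ρ, hρ⟩ := exists_map_eq_neg_of_not_isSquare hmn (y := y * w)
    (by rw [mul_pow, hy, hw, Int.cast_mul])
  rw [map_mul, ← mul_neg] at hρ
  rcases hsign hy τ with hτy | hτy
  · exact ⟨τ, hτy, hτw⟩
  rcases hsign hy ρ with hρy | hρy
  · exact ⟨ρ, hρy, mul_left_cancel₀ hy0 (by rwa [hρy] at hρ)⟩
  · have hρw : ρ w = w :=
      mul_left_cancel₀ (neg_ne_zero.2 hy0) (by rw [← hρy, hρ, hρy, neg_mul_comm])
    exact ⟨ρ * τ, by simp [hτy, hρy], by simp [hτw, hρw]⟩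

theorem exists_map_primitiveRoot_eq_pow_four {ζ r : N} (hζ : IsPrimitiveRoot ζ 5) {n : ℤ}
    (hn : ¬IsSquare n) (h5n : ¬IsSquare (5 * n)) (hr : r ^ 2 = n) :
    ∃ φ : Gal(N/ℚ), φ ζ = ζ ^ 4 ∧ φ r = -r := by
  have hζ5 := hζ.pow_eq_one
  have hsqrt : (1 + 2 * (ζ + ζ ^ 4)) ^ 2 = ((5 : ℤ) : N) := by
    rw [one_add_two_mul_primitiveRoot_sq hζ, Int.cast_ofNat]
  have hmap5 : ∀ φ : Gal(N/ℚ), φ ζ ^ 5 = 1 := fun φ => by rw [← map_pow, hζ5, map_one]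
  obtain ⟨φ, hφ, hφr⟩ := exists_map_eq_self_and_map_eq_neg hn h5n hsqrt hr
  simp only [map_add, map_mul, map_pow, map_one, map_ofNat] at hφ
  rcases eq_or_eq_pow_four_of_add_pow_four_eq hζ5 (hmap5 φ) (by linear_combination hφ / 2) with
    hφζ | hφζ
  · obtain ⟨κ, hκ⟩ := exists_map_eq_neg_of_not_isSquare (by decide +kernel) hsqrt
    simp only [map_add, map_mul, map_pow, map_one, map_ofNat] at hκ
    have hκζ : κ ζ = ζ ^ 2 ∨ κ ζ = (ζ ^ 2) ^ 4 :=
      eq_or_eq_pow_four_of_add_pow_four_eq (by rw [← pow_mul, pow_mul', hζ5, one_pow]) (hmap5 κ)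
        (by linear_combination hκ / 2 - one_add_primitiveRoot_pow_five_eq_zero hζ - ζ ^ 3 * hζ5)
    have hκκr : κ (κ r) = r := by
      rcases sq_eq_sq_iff_eq_or_eq_neg.1
        (show κ r ^ 2 = r ^ 2 by rw [← map_pow, hr, map_intCast]) with h | h <;> simp [h]
    have hκκζ : κ (κ ζ) = ζ ^ 4 := by
      rcases hκζ with h | h <;> simp only [h, map_pow]
      · ring
      · rw [show (((ζ ^ 2) ^ 4) ^ 2) ^ 4 = (ζ ^ 5) ^ 12 * ζ ^ 4 by ring, hζ5, one_pow, one_mul]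
    exact ⟨φ * κ * κ, by simp [AlgEquiv.mul_apply, hκκζ, hφζ], by simp [hκκr, hφr]⟩
  · exact ⟨φ, hφζ, hφr⟩

end GaloisConjugates

theorem primitiveRoot_sub_pow_four_quartic {R : Type*} [CommRing R] [IsDomain R] {ζ : R}
    (hζ : IsPrimitiveRoot ζ 5) : (ζ - ζ ^ 4) ^ 4 + 5 * (ζ - ζ ^ 4) ^ 2 + 5 = 0 := by
  have hsq : (ζ - ζ ^ 4) ^ 2 = ζ ^ 2 + ζ ^ 3 - 2 := by
    linear_combination (ζ ^ 3 - 2) * hζ.pow_eq_one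
  have htrace : (ζ ^ 2 + ζ ^ 3) ^ 2 + (ζ ^ 2 + ζ ^ 3) - 1 = 0 := by
    linear_combination one_add_primitiveRoot_pow_five_eq_zero hζ + (2 + ζ) * hζ.pow_eq_one
  linear_combination ((ζ - ζ ^ 4) ^ 2 + ζ ^ 2 + ζ ^ 3 + 3) * hsq + htrace

theorem isTotallyComplex_of_quartic_eq_zero {M : Type*} [Field M] {x : M} {n : ℤ} (hn : 0 < n)
    (hx : x ^ 4 + 5 * n * x ^ 2 + 5 * n ^ 2 = 0) : IsTotallyComplex M := by
  refine ⟨fun v => InfinitePlace.not_isReal_iff_isComplex.1 fun hv => ?_⟩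
  set f := InfinitePlace.embedding_of_isReal hv
  have hfx := congrArg f hx
  simp only [map_add, map_mul, map_pow, map_ofNat, map_intCast, map_zero] at hfx
  have : (0 : ℝ) < n := by exact_mod_cast hn
  have hpos : 0 < f x ^ 4 + 5 * n * f x ^ 2 + 5 * (n : ℝ) ^ 2 := by positivity
  exact hpos.ne' hfx

theorem eq_one_of_pow_eq_one_of_map_primitiveRoot_eq_inv {M N : Type*} [Field M] [Field N]
    [Algebra M N] {n : ℕ} [NeZero n] (hn : Odd n) {ζ : N} (hζ : IsPrimitiveRoot ζ n) {f : N →+* N}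
    (hfζ : f ζ = ζ⁻¹) (hf : ∀ m : M, f (algebraMap M N m) = algebraMap M N m) {u : M}
    (hu : u ^ n = 1) : u = 1 := by
  have hw : algebraMap M N u ^ n = 1 := by rw [← map_pow, hu, map_one]
  obtain ⟨i, -, hi⟩ := hζ.eq_pow_of_pow_eq_one hw
  have hinv : algebraMap M N u = (algebraMap M N u)⁻¹ :=
    calc algebraMap M N u = f (algebraMap M N u) := (hf u).symm
      _ = (algebraMap M N u)⁻¹ := by rw [← hi, map_pow, hfζ, inv_pow]
  have hsq : u ^ 2 = 1 := (algebraMap M N).injective <| by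
    rw [map_pow, pow_two, map_one]
    nth_rw 1 [hinv]
    exact inv_mul_cancel₀ fun h0 => by simp [h0, NeZero.ne n] at hw
  obtain ⟨k, rfl⟩ := hn
  rwa [pow_succ, pow_mul, hsq, one_pow, one_mul] at hu

theorem map_algebraMap_eq_of_adjoin_simple_eq_top {F K L : Type*} [Field F] [Field K] [Field L]
    [Algebra F K] [Algebra.IsAlgebraic F K] [Algebra F L] [Algebra K L] [IsScalarTower F K L]
    {x : K} (hx : IntermediateField.adjoin F {x} = ⊤) {φ : L →ₐ[F] L}
    (hφ : φ (algebraMap K L x) = algebraMap K L x) (y : K) :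
    φ (algebraMap K L y) = algebraMap K L y := by
  have heq : φ.comp (IsScalarTower.toAlgHom F K L) = IsScalarTower.toAlgHom F K L :=
    AlgHom.ext_of_adjoin_eq_top
      ((IntermediateField.adjoin_simple_eq_top_iff_of_isAlgebraic
        (Algebra.IsAlgebraic.isAlgebraic x)).1 hx) (by rintro _ rfl; exact hφ)
  exact DFunLike.congr_fun heq y

namespace IsPellKummerSystem

theorem sub_mul_quartic {R : Type*} [CommRing R] [IsDomain R] {t t' : ℤ} {ζ r θ θ' : R}
    (h : IsPellKummerSystem t t' ζ r θ θ') :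
    ((ζ - ζ ^ 4) * r) ^ 4 + 5 * (t ^ 2 - 4 : ℤ) * ((ζ - ζ ^ 4) * r) ^ 2 +
      5 * (t ^ 2 - 4 : ℤ) ^ 2 = 0 := by
  have hr : ((t ^ 2 - 4 : ℤ) : R) = r ^ 2 := by rw [h.radical.sq_eq]; push_cast; rfl
  rw [hr]
  linear_combination r ^ 4 * primitiveRoot_sub_pow_four_quartic h.primitive

variable {M N : Type} [Field M] [NumberField M] [Field N] [NumberField N] [Algebra M N]
  {t t' : ℤ} {ζ r θ θ' : 𝓞 N} {x : M}

theorem isTotallyComplex (h : IsPellKummerSystem t t' ζ r θ θ') (ht : 4 < t ^ 2)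
    (hx : algebraMap M N x = algebraMap (𝓞 N) N ((ζ - ζ ^ 4) * r)) : IsTotallyComplex M := by
  have hquartic := h.sub_mul_quartic
  generalize (ζ - ζ ^ 4) * r = y at hx hquartic
  refine isTotallyComplex_of_quartic_eq_zero (x := x) (sub_pos.2 ht)
    ((algebraMap M N).injective ?_)
  simpa only [map_add, map_mul, map_pow, map_ofNat, map_intCast, map_zero, ← hx] using
    congrArg (algebraMap (𝓞 N) N) hquartic

variable [IsGalois ℚ N]

theorem units_eq_one_of_pow_five_eq_one (h : IsPellKummerSystem t t' ζ r θ θ') (ht : 4 < t ^ 2)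
    (hgen : IntermediateField.adjoin ℚ {x} = ⊤)
    (hx : algebraMap M N x = algebraMap (𝓞 N) N ((ζ - ζ ^ 4) * r)) (u : (𝓞 M)ˣ)
    (hu : u ^ 5 = 1) : u = 1 := by
  have hsq := h.sq_sub_four_eq
  have h5n : ¬IsSquare (5 * (t ^ 2 - 4)) := fun ⟨a, ha⟩ =>
    not_isSquare_sq_sub_four (t := t') (by linarith)
      ⟨5 * a, by linear_combination hsq + 25 * ha⟩
  have hζN : IsPrimitiveRoot (algebraMap (𝓞 N) N ζ) 5 :=
    h.primitive.map_of_injective (FaithfulSMul.algebraMap_injective _ _)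
  obtain ⟨φ, hφζ, hφr⟩ := exists_map_primitiveRoot_eq_pow_four hζN
    (not_isSquare_sq_sub_four ht) h5n (r := algebraMap (𝓞 N) N r)
    (by rw [← map_pow, h.radical.sq_eq]; simp [map_ofNat])
  have hφx : φ (algebraMap M N x) = algebraMap M N x := by
    simp only [hx, map_mul, map_sub, map_pow, hφζ, hφr]
    linear_combination algebraMap (𝓞 N) N r * algebraMap (𝓞 N) N ζ *
      (algebraMap (𝓞 N) N ζ ^ 10 + algebraMap (𝓞 N) N ζ ^ 5 + 1) * hζN.pow_eq_one
  have hinv : φ (algebraMap (𝓞 N) N ζ) = (algebraMap (𝓞 N) N ζ)⁻¹ := by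
    rw [hφζ]
    exact eq_inv_of_mul_eq_one_left (by rw [← pow_succ, hζN.pow_eq_one])
  refine Units.ext (FaithfulSMul.algebraMap_injective (𝓞 M) M ?_)
  rw [Units.val_one, map_one]
  exact eq_one_of_pow_eq_one_of_map_primitiveRoot_eq_inv (n := 5) (by decide) hζN
    (f := (φ : N →+* N)) hinv
    (map_algebraMap_eq_of_adjoin_simple_eq_top hgen (φ := (φ : N →ₐ[ℚ] N)) hφx)
    (by rw [← map_pow, ← Units.val_pow_eq_pow_val, hu, Units.val_one, map_one])

theorem exists_injective_classGroup (h : IsPellKummerSystem t t' ζ r θ θ') (ht : 4 < t ^ 2)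
    (h25 : 25 ∣ t) (hW : HasIndependentKummerWitnesses t t')
    (hgen : IntermediateField.adjoin ℚ {x} = ⊤)
    (hx : algebraMap M N x = algebraMap (𝓞 N) N ((ζ - ζ ^ 4) * r)) :
    ∃ f : Multiplicative (ZMod 5 × ZMod 5) →* ClassGroup (𝓞 M), Function.Injective f := by
  have : Fact (Nat.Prime 5) := ⟨Nat.prime_five⟩
  have : IsGalois M N := IsGalois.tower_top_of_isGalois ℚ M N
  have := h.isTotallyComplex ht hx
  have hinj : Function.Injective (algebraMap (𝓞 N) N) := FaithfulSMul.algebraMap_injective _ _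
  obtain ⟨π₁, π₂, hπ₁, hπ₂, hI⟩ := h.exists_kummerHoms (K := M) ht h25 fun σ =>
    hinj ((congrArg σ hx).symm.trans ((σ.commutes x).trans hx))
  have hlift : ∀ φ : Gal(N/ℚ), φ • ζ = ζ → φ • r = r →
      ∃ σ : Gal(N/M), ∀ y : 𝓞 N, σ • y = φ • y := by
    intro φ hζ hr
    have hφx : φ (algebraMap M N x) = algebraMap M N x := by
      rw [hx]
      exact congrArg (algebraMap (𝓞 N) N)
        (show φ • ((ζ - ζ ^ 4) * r) = _ by rw [smul_mul', smul_sub, smul_pow', hζ, hr])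
    exact ⟨AlgEquiv.ofRingEquiv (f := φ.toRingEquiv)
      (map_algebraMap_eq_of_adjoin_simple_eq_top hgen (φ := (φ : N →ₐ[ℚ] N)) hφx), fun _ => rfl⟩
  have hsurj := h.exists_surjective_prod hW hlift hπ₁ hπ₂
  refine exists_injective_classGroup_of_surjective (N := N)
    (h.units_eq_one_of_pow_five_eq_one ht hgen hx)
    (π := (MulEquiv.prodMultiplicative (ZMod 5) (ZMod 5)).symm.toMonoidHom.comp (π₁.prod π₂))
    ((MulEquiv.surjective (MulEquiv.prodMultiplicative _ _).symm).comp hsurj) fun Q hQ _ σ hσ => ?_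
  have hker : (π₁.prod π₂) σ = 1 := hI Q hQ.ne_top hσ
  simp [MonoidHom.mem_ker, hker]

end IsPellKummerSystem

/-! ### Realization over the complex numbers -/

theorem exists_isPellKummerSystem {F : Type*} [Field F] [IsAlgClosed F] [CharZero F] {t t' : ℤ}
    (htt' : t' ^ 2 - 4 = 125 * (t ^ 2 - 4)) {ζ r : F} (hζ : IsPrimitiveRoot ζ 5)
    (hr : r ^ 2 = t ^ 2 - 4) : ∃ θ θ', IsPellKummerSystem t t' ζ r θ θ' := by
  have htt'F : (t' : F) ^ 2 - 4 = 125 * (t ^ 2 - 4) := by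
    exact_mod_cast congrArg (Int.cast : ℤ → F) htt'
  obtain ⟨θ, hθ⟩ := IsAlgClosed.exists_pow_nat_eq ((t + r) / 2) (n := 5) (by norm_num)
  obtain ⟨θ', hθ'⟩ := IsAlgClosed.exists_pow_nat_eq
    ((t' + 5 * (1 + 2 * (ζ + ζ ^ 4)) * r) / 2) (n := 5) (by norm_num)
  refine ⟨θ, θ', hζ, ⟨by rw [hθ]; ring, hr⟩, ⟨by rw [hθ']; ring, ?_⟩⟩
  rw [htt'F, mul_pow, mul_pow, one_add_two_mul_primitiveRoot_sq hζ, hr]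
  ring

theorem IsUnitRadical.of_map {R S : Type*} [CommRing R] [CommRing S] {f : R →+* S}
    (hf : Function.Injective f) {n : ℕ} {ρ θ : R} {T : ℤ} (h : IsUnitRadical n (f ρ) T (f θ)) :
    IsUnitRadical n ρ T θ :=
  ⟨hf (by simpa [map_ofNat] using h.two_mul_pow), hf (by simpa [map_ofNat] using h.sq_eq)⟩

theorem IsPellKummerSystem.of_map {R S : Type*} [CommRing R] [CommRing S] {f : R →+* S}
    (hf : Function.Injective f) {t t' : ℤ} {ζ r θ θ' : R}
    (h : IsPellKummerSystem t t' (f ζ) (f r) (f θ) (f θ')) : IsPellKummerSystem t t' ζ r θ θ' where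
  primitive := h.primitive.of_map_of_injective hf
  radical := h.radical.of_map hf
  radical' := .of_map hf (by simpa [map_ofNat] using h.radical')

open Polynomial in
theorem exists_isGalois_of_monic {P : ℤ[X]} (hP : P.Monic) :
    ∃ N : IntermediateField ℚ ℂ, ∃ _ : NumberField N, IsGalois ℚ N ∧
      ∀ y : ℂ, aeval y P = 0 → ∃ Y : 𝓞 N, algebraMap N ℂ (algebraMap (𝓞 N) N Y) = y := by
  set p := P.map (algebraMap ℤ ℚ) with hp
  have hp0 : p ≠ 0 := (hP.map _).ne_zero
  let N := IntermediateField.adjoin ℚ (p.rootSet ℂ)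
  have : p.IsSplittingField ℚ N :=
    IntermediateField.adjoin_rootSet_isSplittingField (IsAlgClosed.splits _)
  have : FiniteDimensional ℚ N := IsSplittingField.finiteDimensional N p
  have : Normal ℚ N := Normal.of_isSplittingField p
  refine ⟨N, ⟨⟩, ⟨⟩, fun y hy => ?_⟩
  have hyN : y ∈ N := IntermediateField.subset_adjoin _ _ ((mem_rootSet_of_ne hp0).2 (by
    rw [hp, aeval_map_algebraMap, hy]))
  have hint : IsIntegral ℤ (⟨y, hyN⟩ : N) := ⟨P, hP, N.val.injective (by
    rw [← aeval_def, map_zero]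
    exact (aeval_algHom_apply (N.val.restrictScalars ℤ) (⟨y, hyN⟩ : N) P).symm.trans hy)⟩
  exact ⟨⟨_, hint⟩, rfl⟩

open Polynomial in
theorem IsPellKummerSystem.exists_isGalois {t t' : ℤ} {ζ r θ θ' : ℂ}
    (h : IsPellKummerSystem t t' ζ r θ θ') :
    ∃ N : IntermediateField ℚ ℂ, ∃ _ : NumberField N, IsGalois ℚ N ∧
      ∃ Z R Θ Θ' : 𝓞 N, algebraMap N ℂ (algebraMap (𝓞 N) N Z) = ζ ∧
        algebraMap N ℂ (algebraMap (𝓞 N) N R) = r ∧ IsPellKummerSystem t t' Z R Θ Θ' := by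
  let P : ℤ[X] := (X ^ 5 - 1) * (X ^ 2 - C (t ^ 2 - 4)) * (X ^ 10 - C t * X ^ 5 + 1) *
    (X ^ 10 - C t' * X ^ 5 + 1)
  have hP : P.Monic := by
    refine Monic.mul (Monic.mul (Monic.mul ?_ ?_) ?_) ?_ <;> monicity!
  have haev : ∀ {ρ y : ℂ} {T : ℤ}, IsUnitRadical 5 ρ T y →
      aeval y (X ^ 10 - C T * X ^ 5 + 1 : ℤ[X]) = 0 := fun hy => by
    simp only [map_add, map_sub, map_mul, map_pow, map_one, aeval_X, eq_intCast, map_intCast]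
    linear_combination hy.pow_sq_sub_add_one_eq_zero
  obtain ⟨N, hN, hgal, hroots⟩ := exists_isGalois_of_monic hP
  obtain ⟨Z, rfl⟩ := hroots ζ (by simp [P, h.primitive.pow_eq_one])
  obtain ⟨R, rfl⟩ := hroots r (by simp [P, h.radical.sq_eq, map_ofNat])
  obtain ⟨Θ, rfl⟩ := hroots θ (by simp only [P, map_mul, haev h.radical, mul_zero, zero_mul])
  obtain ⟨Θ', rfl⟩ := hroots θ' (by simp only [P, map_mul, haev h.radical', mul_zero])
  exact ⟨N, hN, hgal, Z, R, Θ, Θ', rfl, rfl,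
    .of_map (f := (algebraMap N ℂ).comp (algebraMap (𝓞 N) N))
      ((algebraMap N ℂ).injective.comp (FaithfulSMul.algebraMap_injective (𝓞 N) N)) h⟩

theorem exists_injective_classGroup_adjoin {t t' : ℤ} (ht : 4 < t ^ 2) (h25 : 25 ∣ t)
    (htt' : t' ^ 2 - 4 = 125 * (t ^ 2 - 4)) (hW : HasIndependentKummerWitnesses t t') {ζ r : ℂ}
    (hζ : IsPrimitiveRoot ζ 5) (hr : r ^ 2 = t ^ 2 - 4) :
    ∃ f : Multiplicative (ZMod 5 × ZMod 5) →*
      ClassGroup (𝓞 (IntermediateField.adjoin ℚ {(ζ - ζ⁻¹) * r})), Function.Injective f := by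
  obtain ⟨θ, θ', h⟩ := exists_isPellKummerSystem htt' hζ hr
  obtain ⟨N, hN, hgal, Z, R, Θ, Θ', rfl, rfl, hN'⟩ := h.exists_isGalois
  set ζ := algebraMap N ℂ (algebraMap (𝓞 N) N Z)
  set r := algebraMap N ℂ (algebraMap (𝓞 N) N R)
  set M := IntermediateField.adjoin ℚ {(ζ - ζ⁻¹) * r}
  have hinv : ζ⁻¹ = ζ ^ 4 := inv_eq_of_mul_eq_one_right (by rw [← pow_succ', hζ.pow_eq_one])
  have hx : (ζ - ζ⁻¹) * r = algebraMap N ℂ (algebraMap (𝓞 N) N ((Z - Z ^ 4) * R)) := by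
    rw [hinv, map_mul, map_mul, map_sub, map_sub, map_pow, map_pow]
  have hMN : M ≤ N := by
    rw [IntermediateField.adjoin_simple_le_iff, hx]
    exact SetLike.coe_mem _
  have : FiniteDimensional ℚ M := FiniteDimensional.of_injective
    (IntermediateField.inclusion hMN).toLinearMap (IntermediateField.inclusion_injective hMN)
  have : NumberField M := ⟨⟩
  let : Algebra M N := (IntermediateField.inclusion hMN).toAlgebra
  have hgen : IntermediateField.adjoin ℚ {IntermediateField.AdjoinSimple.gen ℚ ((ζ - ζ⁻¹) * r)} =
      ⊤ := IntermediateField.lift_injective M (by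
    exact (IntermediateField.lift_adjoin_simple ℚ M _).trans (IntermediateField.lift_top ..).symm)
  exact hN'.exists_injective_classGroup ht h25 hW hgen ((algebraMap N ℂ).injective hx)

theorem exists_nat_eq_two_mul_add_of_pell {α β : ℤ} (hα : 0 ≤ α) (hβ : 0 ≤ β)
    (hpell : α ^ 2 - 125 * β ^ 2 = 4) :
    ∃ u v : ℕ, α = 2 * u + v ∧ β = v ∧ (u : ℤ) ^ 2 + u * v - 31 * v ^ 2 = 1 := by
  have hβα : β ≤ α := by nlinarith
  have hpar : Even (α - β) := by
    have heven : Even (α ^ 2 - 125 * β ^ 2) := by rw [hpell]; decide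
    rw [Int.even_sub, Int.even_mul, Int.even_pow' two_ne_zero, Int.even_pow' two_ne_zero] at heven
    rw [Int.even_sub, heven]
    simp [show ¬Even (125 : ℤ) by decide]
  obtain ⟨w, hw⟩ := hpar
  lift w to ℕ using (by omega) with u
  lift β to ℕ using hβ with v
  obtain rfl : α = 2 * u + v := by omega
  exact ⟨u, v, rfl, rfl, by linarith⟩

/-- Proposition 3.6. For integers `α, β ≥ 2` with `α² − 125β² = 4`
and `25 ∣ α + β`, and `d = (α+β)² − 4`, the `5`-rank of the class group of
`M = ℚ((ζ₅ − ζ₅⁻¹)√d)` is at least `2`: there is an injective group homomorphism from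
`(ℤ/5ℤ) × (ℤ/5ℤ)` into the class group of the ring of integers of `M`. -/
theorem stmt_12 (α β : ℤ) (hα : 2 ≤ α) (hβ : 2 ≤ β)
    (hpell : α ^ 2 - 125 * β ^ 2 = 4) (hcong : (25 : ℤ) ∣ (α + β))
    (d : ℤ) (hd : d = (α + β) ^ 2 - 4)
    (ζ : ℂ) (hζ : ζ = Complex.exp (2 * Real.pi * Complex.I / 5))
    (M : IntermediateField ℚ ℂ)
    (hM : M = IntermediateField.adjoin ℚ {(ζ - ζ⁻¹) * ((Real.sqrt (d : ℝ) : ℝ) : ℂ)}) :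
    ∃ f : Multiplicative (ZMod 5 × ZMod 5) →* ClassGroup (𝓞 M),
      Function.Injective f := by
  have ht : 4 < (α + β) ^ 2 := by nlinarith
  have hr : ((√(d : ℝ) : ℝ) : ℂ) ^ 2 = ((α + β : ℤ) : ℂ) ^ 2 - 4 := by
    rw [← Complex.ofReal_pow, Real.sq_sqrt (by exact_mod_cast (hd ▸ sub_nonneg.2 ht.le)), hd]
    push_cast
    rfl
  have hW : HasIndependentKummerWitnesses (α + β) (α + 125 * β) := by
    obtain ⟨u, v, rfl, rfl, huv⟩ := exists_nat_eq_two_mul_add_of_pell (by omega) (by omega) hpell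
    convert hasIndependentKummerWitnesses_of_pell huv (by omega) using 1 <;> ring
  subst hM
  exact exists_injective_classGroup_adjoin ht hcong (by linear_combination -124 * hpell) hW
    (hζ ▸ Complex.isPrimitiveRoot_exp 5 (by norm_num)) hr
end

section
/- Let α, β ≥ 2 be integers satisfying α² − 125β² = 4 and α + β ≡ 0 (mod 25), and set d = (α+β)² − 4 and ε₁ = ((α+β) + √d)/2 ∈ ℝ. Then ε₁² is not a fifth power in the real quadratic field k₁ = ℚ(√d): there is no element x of the subfield of ℝ generated over ℚ by √d such that x⁵ = ε₁². -/
/-!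
Put `s = α + β`, so that `ε₁` is a root of `X² - sX + 1`. If `ε₁²` is a fifth power in `k₁`, then
so is `ε₁`, because `2` and `5` are coprime, say `ε₁ = y⁵`. The element `y` is integral of norm `1`,
so it has an integral trace `t`, and comparing traces gives `s = t⁵ - 5t³ + 5t`, the Dickson
polynomial which sends `y + y⁻¹` to `y⁵ + y⁻⁵`.

On the other hand, with `ω = (1 + √125)/2`, the solutions of `α² - 125β² = 4` are, up to sign, the
powers `ηᵏ` of `η = 56 + 11ω = (123 + 11√125)/2`, so `s` is periodic in `k` modulo any integer.
The congruence `25 ∣ s` forces `k ≡ 7 (mod 25)`. Moreover `η⁷⁵ = 1` modulo `31` and modulo `2251`,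
and of the resulting classes `k ≡ 7, 32, 57 (mod 75)` the second one is excluded modulo `31` and the
other two modulo `2251`, where `t⁵ - 5t³ + 5t` omits the value `s`.
-/

open Polynomial

section QuadraticExtension

section CommRing

variable {R S : Type*} [CommRing R] [Nontrivial R] [CommRing S] [Algebra R S]
  [Algebra.IsQuadraticExtension R S]

theorem sq_sub_trace_mul_add_norm (x : S) :
    x ^ 2 - algebraMap R S (Algebra.trace R S x) * x + algebraMap R S (Algebra.norm R x) = 0 := by
  let b := Module.finBasisOfFinrankEq R S (Algebra.IsQuadraticExtension.finrank_eq_two R S)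
  have hcharpoly : (Algebra.lmul R S x).charpoly =
      X ^ 2 - C (Algebra.trace R S x) * X + C (Algebra.norm R x) := by
    rw [← LinearMap.charpoly_toMatrix _ b, Matrix.charpoly_fin_two,
      Algebra.trace_eq_matrix_trace b, Algebra.norm_eq_matrix_det b]
    rfl
  have hcayley := Algebra.aeval_self_charpoly_lmul (R := R) x
  rw [hcharpoly] at hcayley
  simpa using hcayley

theorem mul_trace_sub_self_eq_one {x : S} (hx : Algebra.norm R x = 1) :
    x * (algebraMap R S (Algebra.trace R S x) - x) = 1 := by
  have h := sq_sub_trace_mul_add_norm (R := R) x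
  rw [hx, map_one] at h
  linear_combination -h

theorem trace_pow_eq_eval_dickson {x : S} (hx : Algebra.norm R x = 1) (n : ℕ) :
    Algebra.trace R S (x ^ n) = (dickson 1 (1 : R) n).eval (Algebra.trace R S x) := by
  set y := algebraMap R S (Algebra.trace R S x) - x with hy
  have hxy : x * y = 1 := mul_trace_sub_self_eq_one hx
  have hxyn : x ^ n * y ^ n = 1 := by rw [← mul_pow, hxy, one_pow]
  have hconj : algebraMap R S (Algebra.trace R S (x ^ n)) - x ^ n = y ^ n := by
    refine (IsUnit.of_mul_eq_one _ hxyn).mul_left_cancel ?_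
    rw [hxyn, mul_trace_sub_self_eq_one (by rw [map_pow, hx, one_pow])]
  have : Nontrivial S := Module.nontrivial_of_finrank_pos (R := R)
    (by rw [Algebra.IsQuadraticExtension.finrank_eq_two]; exact two_pos)
  apply FaithfulSMul.algebraMap_injective R S
  calc algebraMap R S (Algebra.trace R S (x ^ n)) = x ^ n + y ^ n := by rw [← hconj]; ring
    _ = (dickson 1 (1 : S) n).eval (x + y) := (dickson_one_one_eval_add_inv x y hxy n).symm
    _ = algebraMap R S ((dickson 1 (1 : R) n).eval (Algebra.trace R S x)) := by
      rw [← eval_map_apply, map_dickson, map_one, hy, add_sub_cancel]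

end CommRing

section Field

variable {F K : Type*} [Field F] [Field K] [Algebra F K]

theorem trace_eq_and_norm_eq_of_sq_sub_mul_add_eq_zero [Algebra.IsQuadraticExtension F K]
    {x : K} (hx : x ∉ (algebraMap F K).range) {s n : F}
    (h : x ^ 2 - algebraMap F K s * x + algebraMap F K n = 0) :
    Algebra.trace F K x = s ∧ Algebra.norm F x = n := by
  set t := Algebra.trace F K x
  set m := Algebra.norm F x
  have hlin : algebraMap F K (t - s) * x = algebraMap F K (m - n) := by
    simp only [map_sub]
    linear_combination h - sq_sub_trace_mul_add_norm (R := F) x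
  have hts : t = s := by
    by_contra hne
    refine hx ⟨(m - n) / (t - s), ?_⟩
    rw [map_div₀, ← hlin, mul_div_cancel_left₀]
    simpa [sub_eq_zero] using hne
  refine ⟨hts, ?_⟩
  rwa [hts, sub_self, map_zero, zero_mul, eq_comm, map_eq_zero, sub_eq_zero] at hlin

open IntermediateField in
theorem isQuadraticExtension_adjoin_simple {r : K} (hr : r ∉ (algebraMap F K).range)
    {d : F} (hd : r ^ 2 = algebraMap F K d) : Algebra.IsQuadraticExtension F F⟮r⟯ := by
  have hmonic : (X ^ 2 - C d).Monic := monic_X_pow_sub_C d two_ne_zero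
  have hroot : aeval r (X ^ 2 - C d) = 0 := by simp [hd]
  have hint : IsIntegral F r := ⟨_, hmonic, hroot⟩
  have hle : (minpoly F r).natDegree ≤ 2 := by
    simpa using natDegree_le_natDegree (minpoly.min F r hmonic hroot)
  have hge : 2 ≤ (minpoly F r).natDegree := (minpoly.two_le_natDegree_iff hint).2 hr
  exact ⟨(adjoin.finrank hint).trans (hle.antisymm hge)⟩

theorem exists_int_eval_dickson_eq_trace_pow [Algebra ℚ K] [Algebra.IsQuadraticExtension ℚ K]
    {x : K} {n : ℕ} (hn : Odd n) (hint : IsIntegral ℤ (x ^ n))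
    (hnorm : Algebra.norm ℚ (x ^ n) = 1) :
    ∃ t : ℤ, (((dickson 1 (1 : ℤ) n).eval t : ℤ) : ℚ) = Algebra.trace ℚ K (x ^ n) := by
  have hnorm_x : Algebra.norm ℚ x = 1 :=
    hn.strictMono_pow.injective (by simpa using hnorm)
  have hint_trace : IsIntegral ℤ (Algebra.trace ℚ K x) :=
    Algebra.isIntegral_trace (hint.of_pow hn.pos)
  obtain ⟨t, ht⟩ := IsIntegrallyClosed.isIntegral_iff.1 hint_trace
  refine ⟨t, ?_⟩
  rw [trace_pow_eq_eval_dickson hnorm_x, ← ht, algebraMap_int_eq, ← eq_intCast (Int.castRingHom ℚ),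
    ← eval_map_apply, map_dickson, map_one]

theorem exists_int_eval_dickson_eq_of_pow_eq_pow [Algebra ℚ K] [Algebra.IsQuadraticExtension ℚ K]
    {ε : K} (hε : ε ∉ (algebraMap ℚ K).range) {s : ℤ} (hquad : ε ^ 2 - s * ε + 1 = 0) {n m : ℕ}
    (hn : Odd n) (hmn : m.Coprime n) {x : K} (hx : x ^ n = ε ^ m) :
    ∃ t : ℤ, (dickson 1 (1 : ℤ) n).eval t = s := by
  have hint : IsIntegral ℤ ε :=
    ⟨X ^ 2 - C s * X + 1, by monicity!, by rw [← aeval_def]; simpa using hquad⟩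
  obtain ⟨htrace, hnorm⟩ := trace_eq_and_norm_eq_of_sq_sub_mul_add_eq_zero hε
    (s := (s : ℚ)) (n := 1) (by simpa using hquad)
  obtain ⟨y, hy, -⟩ := (pow_eq_pow_iff_of_coprime hmn).1 hx.symm
  rw [hy] at hint htrace hnorm
  obtain ⟨t, ht⟩ := exists_int_eval_dickson_eq_trace_pow hn hint hnorm
  exact ⟨t, by rw [htrace] at ht; exact_mod_cast ht⟩

open IntermediateField in
theorem exists_int_eval_dickson_eq_of_adjoin_pow_eq_pow [CharZero K] {r : K}
    (hr : r ∉ (algebraMap ℚ K).range) {s : ℤ} (hsq : r ^ 2 = (s : K) ^ 2 - 4) {n m : ℕ}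
    (hn : Odd n) (hmn : m.Coprime n) {x : ℚ⟮r⟯} (hx : (x : K) ^ n = (((s : K) + r) / 2) ^ m) :
    ∃ t : ℤ, (dickson 1 (1 : ℤ) n).eval t = s := by
  have : Algebra.IsQuadraticExtension ℚ ℚ⟮r⟯ :=
    isQuadraticExtension_adjoin_simple hr (d := (s : ℚ) ^ 2 - 4) (by simp [hsq])
  let ε : ℚ⟮r⟯ := (s + AdjoinSimple.gen ℚ r) / 2
  have hcoe : (ε : K) = (s + r) / 2 := rfl
  have hquad : ε ^ 2 - s * ε + 1 = 0 := by
    apply Subtype.coe_injective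
    push_cast
    rw [hcoe]
    linear_combination hsq / 4
  have hε : ε ∉ (algebraMap ℚ ℚ⟮r⟯).range := by
    rintro ⟨q, hq⟩
    have hqr : (q : K) = (s + r) / 2 := by rw [← hcoe, ← hq]; simp
    refine hr ⟨2 * q - s, ?_⟩
    simp only [eq_ratCast, Rat.cast_sub, Rat.cast_mul, Rat.cast_ofNat, Rat.cast_intCast, hqr]
    ring
  have hpow : x ^ n = ε ^ m := Subtype.coe_injective (by push_cast; rw [hcoe, hx])
  exact exists_int_eval_dickson_eq_of_pow_eq_pow hε hquad hn hmn hpow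

end Field

end QuadraticExtension

theorem irrational_sqrt_sq_sub_four {s : ℤ} (hs : 3 ≤ |s|) :
    Irrational √((s ^ 2 - 4 : ℤ) : ℝ) := by
  have hsq : |s| ^ 2 = s ^ 2 := sq_abs s
  rw [irrational_sqrt_intCast_iff]
  refine ⟨?_, by nlinarith⟩
  rintro ⟨z, hz⟩
  have hz_abs : |z| * |z| = s ^ 2 - 4 := by rw [abs_mul_abs_self, hz]
  have hz_nonneg : 0 ≤ |z| := abs_nonneg z
  have hlt : |z| < |s| := by nlinarith
  have hgt : |s| - 1 < |z| := by nlinarith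
  omega

theorem eval_dickson_one_one_five {R : Type*} [CommRing R] (t : R) :
    (dickson 1 (1 : R) 5).eval t = t ^ 5 - 5 * t ^ 3 + 5 * t := by
  simp only [dickson_add_two, zero_add, dickson_one, dickson_zero, eval_sub, eval_mul, eval_X,
    map_one, eval_one, eval_natCast, eval_ofNat]
  ring

section Pell

open QuadraticAlgebra

/-- The unit `η = 56 + 11ω = (123 + 11√125)/2` of `R[ω]`, where `ω² = 31 + ω`, that is,
`ω = (1 + √125)/2`. -/
def pellUnit (R : Type*) [CommRing R] : (QuadraticAlgebra R 31 1)ˣ where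
  val := ⟨56, 11⟩
  inv := ⟨67, -11⟩
  val_inv := by ext <;> simp <;> ring
  inv_val := by ext <;> simp <;> ring

/-- The sum `α + β` of the coordinates of `ηᵏ = (α + β√125)/2`. In terms of the basis `1, ω` used by
`QuadraticAlgebra`, a pair `(α, β)` is `(α - β)/2 + βω`, and the sum is twice that of the
coordinates. -/
def pellSum (R : Type*) [CommRing R] (k : ℤ) : R :=
  2 * ((pellUnit R ^ k).val.re + (pellUnit R ^ k).val.im)

theorem natAbs_im_mul_pellUnit_inv_lt {z : QuadraticAlgebra ℤ 31 1} (hnorm : norm z = 1)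
    (hpos : 0 < 2 * z.re + z.im) (him : 0 < z.im) :
    (z * ↑(pellUnit ℤ)⁻¹).im.natAbs < z.im.natAbs ∧
      0 < 2 * (z * ↑(pellUnit ℤ)⁻¹).re + (z * ↑(pellUnit ℤ)⁻¹).im := by
  obtain ⟨a, b⟩ := z
  simp only [norm_def, pellUnit, Units.inv_mk, re_mul, im_mul] at hnorm hpos him ⊢
  -- `2 * re + im` is `123 * a - 626 * b` at `z * η⁻¹`, and `im` is `56 * b - 11 * a`.
  have hlower : 626 * b < 123 * a := by nlinarith
  have hupper : 11 * a < 57 * b := by nlinarith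
  constructor <;> omega

theorem natAbs_im_mul_pellUnit_lt {z : QuadraticAlgebra ℤ 31 1} (hnorm : norm z = 1)
    (hpos : 0 < 2 * z.re + z.im) (him : z.im < 0) :
    (z * ↑(pellUnit ℤ)).im.natAbs < z.im.natAbs ∧
      0 < 2 * (z * ↑(pellUnit ℤ)).re + (z * ↑(pellUnit ℤ)).im := by
  obtain ⟨a, b⟩ := z
  simp only [norm_def, pellUnit, re_mul, im_mul] at hnorm hpos him ⊢
  -- `2 * re + im` is `123 * a + 749 * b` at `z * η`, and `im` is `67 * b + 11 * a`.
  have hlower : -749 * b < 123 * a := by nlinarith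
  have hupper : 11 * a < -68 * b := by nlinarith
  constructor <;> omega

theorem exists_eq_pellUnit_zpow {z : QuadraticAlgebra ℤ 31 1} (hnorm : norm z = 1)
    (hpos : 0 < 2 * z.re + z.im) : ∃ k : ℤ, z = ↑(pellUnit ℤ ^ k) := by
  have norm_pellUnit : norm (pellUnit ℤ).val = 1 := by simp [norm_def, pellUnit]
  have norm_pellUnit_inv : norm (pellUnit ℤ)⁻¹.val = 1 := by simp [norm_def, pellUnit]
  induction h : z.im.natAbs using Nat.strong_induction_on generalizing z with
  | _ n ih =>
    subst h
    rcases lt_trichotomy z.im 0 with him | him | him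
    · obtain ⟨hlt, hpos'⟩ := natAbs_im_mul_pellUnit_lt hnorm hpos him
      obtain ⟨k, hk⟩ := ih _ hlt (by rw [map_mul, hnorm, norm_pellUnit, one_mul]) hpos' rfl
      exact ⟨k - 1, by rw [zpow_sub_one, Units.val_mul, ← hk, Units.mul_inv_cancel_right]⟩
    · have hre : z.re = 1 := by
        rw [norm_def, him] at hnorm
        nlinarith
      exact ⟨0, by ext <;> simp [hre, him]⟩
    · obtain ⟨hlt, hpos'⟩ := natAbs_im_mul_pellUnit_inv_lt hnorm hpos him
      obtain ⟨k, hk⟩ := ih _ hlt (by rw [map_mul, hnorm, norm_pellUnit_inv, one_mul]) hpos' rfl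
      exact ⟨k + 1, by rw [zpow_add_one, Units.val_mul, ← hk, Units.inv_mul_cancel_right]⟩

/-- Reduction of coefficients along `ℤ → R`. -/
def coeffCast (R : Type*) [CommRing R] : QuadraticAlgebra ℤ 31 1 →ₐ[ℤ] QuadraticAlgebra R 31 1 :=
  lift ⟨ω, by ext <;> simp⟩

theorem intCast_pellSum (R : Type*) [CommRing R] (k : ℤ) :
    ((pellSum ℤ k : ℤ) : R) = pellSum R k := by
  have hmap : Units.map (coeffCast R : _ →* _) (pellUnit ℤ) = pellUnit R := by
    ext <;> simp [coeffCast, pellUnit]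
  have hre (z) : (coeffCast R z).re = z.re := by simp [coeffCast]
  have him (z) : (coeffCast R z).im = z.im := by simp [coeffCast]
  have hpow : coeffCast R (pellUnit ℤ ^ k).val = (pellUnit R ^ k).val := by
    rw [← hmap, ← map_zpow, Units.coe_map]
    rfl
  simp [pellSum, ← hpow, hre, him]

theorem pellSum_emod {R : Type*} [CommRing R] {n : ℤ} (hn : pellUnit R ^ n = 1) (k : ℤ) :
    pellSum R (k % n) = pellSum R k := by
  rw [pellSum, pellSum, ← zpow_eq_zpow_emod k hn]

theorem exists_pellSum_eq_add {α β : ℤ} (hα : 0 < α) (hpell : α ^ 2 - 125 * β ^ 2 = 4) :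
    ∃ k : ℤ, pellSum ℤ k = α + β := by
  have heven : Even (α - β) := by
    have h : Even (α ^ 2 - 125 * β ^ 2) := hpell ▸ ⟨2, rfl⟩
    simpa [parity_simps, show ¬ Even (125 : ℤ) by decide] using h
  obtain ⟨a, ha⟩ := heven
  obtain rfl : α = 2 * a + β := by linarith
  obtain ⟨k, hk⟩ := exists_eq_pellUnit_zpow (z := ⟨a, β⟩) (by rw [norm_def]; linarith)
    (by simpa using hα)
  refine ⟨k, ?_⟩
  rw [pellSum, ← hk]
  ring

theorem emod_eq_seven_of_pellSum_zmod_eq_zero {k : ℤ} (hk : pellSum (ZMod 25) k = 0) :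
    k % 25 = 7 := by
  have hres : ∀ r ∈ Finset.range 50, pellSum (ZMod 25) r = 0 → r % 25 = 7 := by decide +kernel
  have hperiod : pellUnit (ZMod 25) ^ (50 : ℤ) = 1 := by decide +kernel
  have hmod := hres (k % 50).toNat (Finset.mem_range.2 (by omega))
  rw [Int.toNat_of_nonneg (by omega), pellSum_emod hperiod] at hmod
  have := hmod hk
  omega

theorem quintic_ne_pellSum_zmod_31 (t : ZMod 31) :
    t ^ 5 - 5 * t ^ 3 + 5 * t ≠ pellSum (ZMod 31) 32 := by
  decide +kernel +revert

theorem quintic_ne_pellSum_zmod_2251 (t : ZMod 2251) :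
    t ^ 5 - 5 * t ^ 3 + 5 * t ≠ pellSum (ZMod 2251) 7 ∧
      t ^ 5 - 5 * t ^ 3 + 5 * t ≠ pellSum (ZMod 2251) 57 := by
  decide +kernel +revert

theorem quintic_ne_pellSum {k : ℤ} (hk : 25 ∣ pellSum ℤ k) (t : ℤ) :
    t ^ 5 - 5 * t ^ 3 + 5 * t ≠ pellSum ℤ k := by
  intro ht
  have hred (n : ℕ) (hn : pellUnit (ZMod n) ^ (75 : ℤ) = 1) :
      (t : ZMod n) ^ 5 - 5 * (t : ZMod n) ^ 3 + 5 * t = pellSum (ZMod n) (k % 75) := by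
    rw [pellSum_emod hn, ← intCast_pellSum, ← ht]
    push_cast
    rfl
  have h31 := hred 31 (by decide +kernel)
  have h2251 := hred 2251 (by decide +kernel)
  have hk25 : k % 25 = 7 := emod_eq_seven_of_pellSum_zmod_eq_zero <| by
    rw [← intCast_pellSum]
    exact (ZMod.intCast_zmod_eq_zero_iff_dvd _ 25).2 hk
  obtain h | h | h : k % 75 = 7 ∨ k % 75 = 32 ∨ k % 75 = 57 := by omega
  all_goals rw [h] at h31 h2251
  · exact (quintic_ne_pellSum_zmod_2251 _).1 h2251
  · exact quintic_ne_pellSum_zmod_31 _ h31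
  · exact (quintic_ne_pellSum_zmod_2251 _).2 h2251

theorem quintic_ne_add_of_pell {α β : ℤ} (hpell : α ^ 2 - 125 * β ^ 2 = 4) (hdvd : 25 ∣ α + β)
    (t : ℤ) : t ^ 5 - 5 * t ^ 3 + 5 * t ≠ α + β := by
  wlog hα : 0 < α generalizing α β t
  · have hα_neg : 0 < -α := by
      have : α ≠ 0 := by rintro rfl; nlinarith
      omega
    intro ht
    refine this (α := -α) (β := -β) (by linarith) (by omega) (-t) hα_neg ?_
    linear_combination -ht
  · obtain ⟨k, hk⟩ := exists_pellSum_eq_add hα hpell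
    rw [← hk] at hdvd ⊢
    exact quintic_ne_pellSum hdvd t

end Pell

theorem stmt_13_general (α β : ℤ) (hpell : α ^ 2 - 125 * β ^ 2 = 4) (hcong : (25 : ℤ) ∣ (α + β))
    (d : ℤ) (hd : d = (α + β) ^ 2 - 4)
    (ε₁ : ℝ) (hε : ε₁ = (((α : ℝ) + (β : ℝ)) + Real.sqrt (d : ℝ)) / 2) :
    ¬ ∃ x : IntermediateField.adjoin ℚ {Real.sqrt (d : ℝ)},
        (x : ℝ) ^ 5 = ε₁ ^ 2 := by
  rintro ⟨x, hx⟩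
  have hs : 3 ≤ |α + β| := by
    have hne : α + β ≠ 0 := fun h ↦ by
      obtain rfl := eq_neg_of_add_eq_zero_left h
      nlinarith
    have := Int.le_of_dvd (abs_pos.2 hne) ((dvd_abs _ _).2 hcong)
    linarith
  have hirr : Irrational √(d : ℝ) := hd ▸ irrational_sqrt_sq_sub_four hs
  have hd_nonneg : (0 : ℝ) ≤ d := by exact_mod_cast (by nlinarith [sq_abs (α + β)] : 0 ≤ d)
  have hsq : √(d : ℝ) ^ 2 = ((α + β : ℤ) : ℝ) ^ 2 - 4 := by
    rw [Real.sq_sqrt hd_nonneg, hd]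
    push_cast
    rfl
  obtain ⟨t, ht⟩ := exists_int_eval_dickson_eq_of_adjoin_pow_eq_pow (s := α + β) (n := 5) (m := 2)
    hirr hsq (by decide) (by decide) (x := x) (by rw [hx, hε]; push_cast; rfl)
  exact quintic_ne_add_of_pell hpell hcong t (eval_dickson_one_one_five t ▸ ht)

/-- For integers `α, β ≥ 2` with `α² − 125β² = 4` and `25 ∣ α + β`,
`d = (α+β)² − 4` and `ε₁ = ((α+β) + √d)/2`, the square `ε₁²` is not a fifth power in
the real quadratic field `k₁ = ℚ(√d) ⊆ ℝ`. -/
theorem stmt_13 (α β : ℤ) (hα : 2 ≤ α) (hβ : 2 ≤ β)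
    (hpell : α ^ 2 - 125 * β ^ 2 = 4) (hcong : (25 : ℤ) ∣ (α + β))
    (d : ℤ) (hd : d = (α + β) ^ 2 - 4)
    (ε₁ : ℝ) (hε : ε₁ = (((α : ℝ) + (β : ℝ)) + Real.sqrt (d : ℝ)) / 2) :
    ¬ ∃ x : IntermediateField.adjoin ℚ {Real.sqrt (d : ℝ)},
        (x : ℝ) ^ 5 = ε₁ ^ 2 :=
  stmt_13_general α β hpell hcong d hd ε₁ hε
end
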